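/- (Asymptotic Hopf's lemma for antisymmetric functions.) Fix λ ∈ ℝ and 0 < s < 1. Let T_λ = {x ∈ ℝⁿ : x₁ = λ}, Σ̃_λ = {x ∈ ℝⁿ : x₁ > λ}, and for x ∈ ℝⁿ let x^λ = (2λ − x₁, x₂, …, x_n). Suppose w_λ ∈ (C^{1,1}_loc(Σ̃_λ) ∩ 𝓛_{2s}) × C¹((0,∞)) is bounded on ℝⁿ × (0,∞) and satisfies: (i) ∂w_λ/∂t(x,t) + (−Δ)^s w_λ(x,t) = c_λ(x,t) w_λ(x,t) for all (x,t) ∈ Σ̃_λ × (0,∞), where c_λ is bounded uniformly in t; (ii) w_λ(x^λ, t) = −w_λ(x,t) for all (x,t) ∈ Σ̃_λ × (0,∞); (iii) liminf_{t→∞} w_λ(x,t) ≥ 0 for every x ∈ Σ̃_λ. Let ψ_λ be an ω-limit of w_λ, i.e. there exists a sequence t_k → ∞ such that w_λ(·, t_k) → ψ_λ uniformly on ℝⁿ. If ψ_λ ≥ 0 on Σ̃_λ and ψ_λ(x) > 0 for some x ∈ Σ̃_λ, then for every point x ∈ T_λ = ∂Σ̃_λ one has ∂ψ_λ/∂ν(x)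 < 0, where ν = (−1, 0, …, 0) is the outward normal to Σ̃_λ; equivalently, liminf_{h→0⁺} ψ_λ(x + h e₁)/h > 0 for every x ∈ T_λ, where e₁ = (1,0,…,0). -/

import Mathlib

open MeasureTheory Filter Metric Topology Set

noncomputable section

/-- Euclidean space `ℝⁿ`. -/
abbrev Eucl (n : ℕ) := EuclideanSpace ℝ (Fin n)

/-- `v` is locally `C^{1,1}` on the open set `Ω`. -/
def C11loc {n : ℕ} (Ω : Set (Eucl n)) (v : Eucl n → ℝ) : Prop :=
  ∀ x ∈ Ω, ∃ r > 0, ball x r ⊆ Ω ∧ DifferentiableOn ℝ v (ball x r) ∧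
    ∃ K : NNReal, LipschitzOnWith K (fderiv ℝ v) (ball x r)

/-- The tail-integrability class `𝓛_{2s}`. -/
def L2s {n : ℕ} (s : ℝ) (v : Eucl n → ℝ) : Prop :=
  LocallyIntegrable v volume ∧
    Integrable (fun x => |v x| / (1 + ‖x‖ ^ ((n : ℝ) + 2 * s))) volume

/-- `L` is the value of the fractional Laplacian `(-Δ)^s v (x)`, defined as a
principal value:  `L = C_{n,s} P.V. ∫ (v(x) - v(y)) / |x-y|^{n+2s} dy`. -/
def IsFracLap {n : ℕ} (Cns s : ℝ) (v : Eucl n → ℝ) (x : Eucl n) (L : ℝ) : Prop :=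
  Tendsto (fun ε : ℝ =>
      Cns * ∫ y in {y : Eucl n | ε < dist x y}, (v x - v y) / dist x y ^ ((n : ℝ) + 2 * s))
    (𝓝[>] 0) (𝓝 L)

/-- The reflection `x^λ = (2λ - x₁, x₂, …, xₙ)` of `x` across the hyperplane `{x₁ = λ}`. -/
def reflect {n : ℕ} [NeZero n] (lam : ℝ) (x : Eucl n) : Eucl n :=
  x + (2 * (lam - x 0)) • EuclideanSpace.single (0 : Fin n) (1 : ℝ)


/-- Lower right Dini derivative of `g` at `t` is at least `H`. -/
def DiniGE (g : ℝ → ℝ) (t H : ℝ) : Prop :=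
  ∀ r < H, ∀ᶠ τ in 𝓝[>] t, g t + r * (τ - t) ≤ g τ

lemma ahl_mono {f : ℝ → ℝ} {a b : ℝ} (hab : a ≤ b) (hf : ContinuousOn f (Icc a b))
    (h : ∀ x ∈ Ico a b, ∀ᶠ z in 𝓝[>] x, f x ≤ f z) : f a ≤ f b := by
  have hcl : IsClosed ({x | f a ≤ f x} ∩ Icc a b) := by
    have := hf.preimage_isClosed_of_isClosed isClosed_Icc (isClosed_Ici (a := f a))
    rw [inter_comm]; exact this
  have := hcl.Icc_subset_of_forall_exists_gt (le_refl (f a)) (by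
    intro x hx y hy
    have h1 := h x hx.2
    have h2 : Ioc x y ∈ 𝓝[>] x := Ioc_mem_nhdsGT hy
    obtain ⟨z, hz1, hz2⟩ := (h1.and h2).exists
    exact ⟨z, le_trans hx.1 hz1, hz2⟩)
  exact this (right_mem_Icc.2 hab)

lemma ahl_dini_growth {g : ℝ → ℝ} {a b r : ℝ} (hab : a ≤ b) (hg : ContinuousOn g (Icc a b))
    (h : ∀ x ∈ Ico a b, ∃ H, r < H ∧ DiniGE g x H) : r * (b - a) ≤ g b - g a := by
  have := ahl_mono (f := fun t => g t - r * t) hab (by fun_prop) (by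
    intro x hx
    obtain ⟨H, hH, hd⟩ := h x hx
    filter_upwards [hd r hH] with z hz
    linarith)
  linarith

/-- left difference quotients from right Dini derivative bounds -/
lemma ahl_left {g H : ℝ → ℝ} {α β t r : ℝ} (hg : ContinuousOn g (Ioo α β))
    (hH : ContinuousOn H (Ioo α β)) (hd : ∀ τ ∈ Ioo α β, DiniGE g τ (H τ))
    (ht : t ∈ Ioo α β) (hr : r < H t) :
    ∃ t' ∈ Ioo α t, r * (t - t') ≤ g t - g t' := by
  have hc : ContinuousAt H t := hH.continuousAt (Ioo_mem_nhds ht.1 ht.2)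
  have h1 : ∀ᶠ τ in 𝓝 t, r < H τ := hc.eventually (lt_mem_nhds hr)
  obtain ⟨l, u, hlu, hsub⟩ := mem_nhds_iff_exists_Ioo_subset.1
    (inter_mem h1 (Ioo_mem_nhds ht.1 ht.2))
  have hl : l < t := hlu.1
  refine ⟨(l + t) / 2, ⟨?_, by linarith⟩, ?_⟩
  · exact (hsub ⟨by linarith, by linarith [hlu.2]⟩ : (l+t)/2 ∈ _ ).2.1
  · apply ahl_dini_growth (by linarith)
    · apply hg.mono
      intro x hx
      exact (hsub ⟨by linarith [hx.1], by linarith [hx.2, hlu.2]⟩).2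
    · intro x hx
      have := hsub (⟨by linarith [hx.1], by linarith [hx.2, hlu.2]⟩ : x ∈ Ioo l u)
      exact ⟨H x, this.1, hd x this.2⟩

lemma ahl_first_touch {E : Type*} [PseudoMetricSpace E] {X : Set E} (hX : IsCompact X)
    {u : E → ℝ → ℝ} {a T : ℝ}
    (hu : ContinuousOn (fun q : E × ℝ => u q.1 q.2) (X ×ˢ Icc a T))
    (h0 : ∀ x ∈ X, 0 < u x a)
    (ht : ∀ t ∈ Ioc a T, ∀ x ∈ X, u x t = 0 → (∀ y ∈ X, 0 ≤ u y t) → ∃ t' ∈ Ico a t, u x t' ≤ 0) :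
    ∀ x ∈ X, ∀ t ∈ Icc a T, 0 < u x t := by
  by_contra! hcon
  obtain ⟨x1, hx1, t1, ht1, hle⟩ := hcon
  have hK : IsCompact (X ×ˢ Icc a T) := hX.prod isCompact_Icc
  let Z := (X ×ˢ Icc a T) ∩ {q : E × ℝ | u q.1 q.2 ≤ 0}
  have hZeq : ∃ F, IsClosed F ∧ Z = (X ×ˢ Icc a T) ∩ F := by
    obtain ⟨F, hF, hFe⟩ := (continuousOn_iff_isClosed.1 hu) (Iic 0) isClosed_Iic
    refine ⟨F, hF, ?_⟩
    have : Z = ((fun q : E × ℝ => u q.1 q.2) ⁻¹' Iic 0) ∩ (X ×ˢ Icc a T) := by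
      ext q; simp [Z, and_comm]
    rw [this, hFe, inter_comm]
  obtain ⟨F, hF, hFe⟩ := hZeq
  have hZc : IsCompact Z := by rw [hFe]; exact hK.inter_right hF
  have hZne : Z.Nonempty := ⟨(x1, t1), ⟨⟨hx1, ht1⟩, hle⟩⟩
  obtain ⟨⟨x, t⟩, hxt, hmin⟩ := hZc.exists_isMinOn hZne (f := fun q : E × ℝ => q.2) (by fun_prop)
  obtain ⟨⟨hxX, htI⟩, hxle⟩ := hxt
  simp only at hxX htI
  have hxle : u x t ≤ 0 := hxle
  have hbefore : ∀ y ∈ X, ∀ t' ∈ Ico a t, 0 < u y t' := by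
    intro y hy t' ht'
    by_contra! hc
    have : (y, t') ∈ Z := ⟨⟨hy, ht'.1, ht'.2.le.trans htI.2⟩, hc⟩
    have := hmin this
    simp only [mem_ofPred_eq] at this
    linarith [ht'.2]
  have hat : a < t := by
    rcases htI.1.lt_or_eq with h | h
    · exact h
    · subst h; linarith [h0 x hxX]
  have hnn : ∀ y ∈ X, 0 ≤ u y t := by
    intro y hy
    have hc : ContinuousWithinAt (fun τ => u y τ) (Icc a T) t := by
      have h1 : ContinuousOn (fun τ => u y τ) (Icc a T) := by
        apply hu.comp (f := fun τ : ℝ => (y, τ)) (by fun_prop)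
        intro τ hτ; exact ⟨hy, hτ⟩
      exact h1 t htI
    have hc2 : Tendsto (fun τ => u y τ) (𝓝[Ico a t] t) (𝓝 (u y t)) :=
      hc.mono (fun τ hτ => ⟨hτ.1, hτ.2.le.trans htI.2⟩)
    have : (𝓝[Ico a t] t).NeBot := by
      rw [← mem_closure_iff_nhdsWithin_neBot, closure_Ico hat.ne]
      exact right_mem_Icc.2 hat.le
    apply ge_of_tendsto hc2
    filter_upwards [self_mem_nhdsWithin] with τ hτ
    exact (hbefore y hy τ hτ).le
  obtain ⟨t', ht', hle'⟩ := ht t ⟨hat, htI.2⟩ x hxX (le_antisymm hxle (hnn x hxX)) hnn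
  linarith [hbefore x hxX t' ht']

lemma ahl_gaps {y : ℝ → ℝ} {B : Set ℝ} {α β C : ℝ}
    (hBcl : ∀ a b, α < a → b < β → IsClosed (B ∩ Icc a b))
    (hy : ContinuousOn y (Ioo α β))
    (hder : ∀ a ∈ B ∩ Ioo α β, ∃ d, HasDerivAt y d a ∧ -C ≤ d)
    (hgap : ∀ a ∈ B ∩ Ioo α β, ∀ b ∈ Ioo α β, a ≤ b → (∀ τ ∈ Ioo a b, τ ∉ B) →
      y b - y a ≥ -C * (b - a)) :
    ∀ t ∈ B ∩ Ioo α β, ∀ τ ∈ Ioo α β, t ≤ τ → y τ - y t ≥ -(C + 1) * (τ - t) := by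
  intro t ht τ hτ htτ
  let S := (B ∩ Icc t τ) ∩ {σ | -(C + 1) * (σ - t) ≤ y σ - y t}
  have hIccsub : Icc t τ ⊆ Ioo α β := fun σ hσ => ⟨ht.2.1.trans_le hσ.1, hσ.2.trans_lt hτ.2⟩
  have hBc : IsCompact (B ∩ Icc t τ) := by
    have := hBcl t τ ht.2.1 hτ.2
    exact isCompact_Icc.of_isClosed_subset this inter_subset_right
  have hScl : IsCompact S := by
    have h1 : ContinuousOn (fun σ => y σ - y t - (-(C + 1) * (σ - t))) (B ∩ Icc t τ) := by
      have : ContinuousOn y (B ∩ Icc t τ) := hy.mono (fun σ hσ => hIccsub hσ.2)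
      fun_prop
    obtain ⟨F, hF, hFe⟩ := (continuousOn_iff_isClosed.1 h1) (Ici 0) isClosed_Ici
    have : S = (B ∩ Icc t τ) ∩ F := by
      rw [inter_comm _ F, ← hFe]; ext q; simp only [S, mem_inter_iff, mem_ofPred_eq, mem_preimage, mem_Ici, sub_nonneg]; tauto
    rw [this]; exact hBc.inter_right hF
  have hSne : S.Nonempty := ⟨t, ⟨⟨ht.1, left_mem_Icc.2 htτ⟩, by simp⟩⟩
  obtain ⟨σ, hσ, hmax⟩ := hScl.exists_isMaxOn hSne (f := fun x => x) continuousOn_id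
  obtain ⟨⟨hσB, hσI⟩, hσy⟩ := hσ
  simp only [mem_ofPred_eq] at hσy
  have hσI' := hIccsub hσI
  by_cases hg : ∀ τ' ∈ Ioo σ τ, τ' ∉ B
  · have := hgap σ ⟨hσB, hσI'⟩ τ hτ hσI.2 hg
    nlinarith [hσI.2]
  · exfalso
    push Not at hg
    obtain ⟨b0, hb0, hb0B⟩ := hg
    -- derivative bound near σ
    obtain ⟨d, hd, hdC⟩ := hder σ ⟨hσB, hσI'⟩
    have hev : ∀ᶠ z in 𝓝[>] σ, -(C+1) * (z - σ) ≤ y z - y σ := by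
      have h1 := hasDerivAt_iff_tendsto_slope.1 hd
      have h2 : ∀ᶠ z in 𝓝[≠] σ, -(C+1) < slope y σ z := h1.eventually (lt_mem_nhds (by linarith))
      have h3 : ∀ᶠ z in 𝓝[>] σ, -(C+1) < slope y σ z :=
        h2.filter_mono (nhdsWithin_mono _ (fun z hz => ne_of_gt hz))
      filter_upwards [h3, self_mem_nhdsWithin] with z hz hzσ
      have hzσ : σ < z := hzσ
      rw [slope_def_field, lt_div_iff₀ (by linarith)] at hz
      linarith
    obtain ⟨v, hv, hvsub⟩ := mem_nhdsGT_iff_exists_Ioo_subset.1 hev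
    have hv : σ < v := hv
    by_cases hacc : ∃ b ∈ B, σ < b ∧ b < v ∧ b ≤ τ
    · obtain ⟨b, hbB, h1, h2, h3⟩ := hacc
      have h4 := hvsub (⟨h1, h2⟩ : b ∈ Ioo σ v)
      simp only [mem_ofPred_eq] at h4
      have : b ∈ S := ⟨⟨hbB, hσI.1.trans h1.le, h3⟩, by simp only [mem_ofPred_eq]; linarith⟩
      have := hmax this
      simp only [mem_ofPred_eq] at this
      linarith
    · push Not at hacc
      let B2 := B ∩ Icc ((σ + min v b0)/2) b0
      have hm : σ < min v b0 := lt_min hv hb0.1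
      have hB2c : IsCompact B2 := by
        have := hBcl ((σ + min v b0)/2) b0 (by linarith [hσI'.1]) (hb0.2.trans hτ.2)
        exact isCompact_Icc.of_isClosed_subset this inter_subset_right
      have hB2ne : B2.Nonempty := ⟨b0, hb0B, by constructor <;> linarith [min_le_right v b0, hb0.1]⟩
      obtain ⟨b, hb, hbmin⟩ := hB2c.exists_isMinOn hB2ne (f := fun x => x) continuousOn_id
      have hσb : σ < b := by linarith [hb.2.1]
      have hbτ : b < τ := hb.2.2.trans_lt hb0.2
      have hgapb : ∀ τ' ∈ Ioo σ b, τ' ∉ B := by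
        intro τ' hτ' hB
        rcases lt_or_ge τ' ((σ + min v b0)/2) with h | h
        · have := hacc τ' hB hτ'.1 (by linarith [min_le_left v b0])
          linarith [hτ'.2]
        · have := hbmin (⟨hB, h, hτ'.2.le.trans hb.2.2⟩ : τ' ∈ B2)
          simp only [mem_ofPred_eq] at this
          linarith [hτ'.2]
      have h5 := hgap σ ⟨hσB, hσI'⟩ b ⟨by linarith [hσI'.1], by linarith [hτ.2]⟩ hσb.le hgapb
      have : b ∈ S := ⟨⟨hb.1, hσI.1.trans hσb.le, hbτ.le⟩, by simp only [mem_ofPred_eq]; nlinarith⟩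
      have := hmax this
      simp only [mem_ofPred_eq] at this
      linarith


/-- the kernel -/
def fker {n : ℕ} (p : ℝ) (z : Eucl n) : ℝ := 1 / ‖z‖ ^ p

/-- second difference -/
def d2 {n : ℕ} (v : Eucl n → ℝ) (x z : Eucl n) : ℝ := 2 * v x - v (x + z) - v (x - z)

/-- the fractional Laplacian (up to a constant) in second difference form -/
def Lam {n : ℕ} (p : ℝ) (v : Eucl n → ℝ) (x : Eucl n) : ℝ := ∫ z, d2 v x z * fker p z

/-- the quadratic weight -/
def q1 {n : ℕ} (z : Eucl n) : ℝ := min 1 (‖z‖ ^ 2)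

lemma fker_nonneg {n : ℕ} (p : ℝ) (z : Eucl n) : 0 ≤ fker p z := by
  unfold fker; positivity

lemma fker_neg {n : ℕ} (p : ℝ) (z : Eucl n) : fker p (-z) = fker p z := by
  simp [fker]

lemma q1_nonneg {n : ℕ} (z : Eucl n) : 0 ≤ q1 z := by
  unfold q1; positivity

lemma fker_meas {n : ℕ} (p : ℝ) : Measurable (fker p : Eucl n → ℝ) := by
  unfold fker; fun_prop

lemma q1_meas {n : ℕ} : Measurable (q1 : Eucl n → ℝ) := by
  unfold q1; fun_prop

lemma q1_ker_integrable {n : ℕ} [NeZero n] {s : ℝ} (hs : 0 < s) (hs1 : s < 1) :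
    Integrable (fun z : Eucl n => q1 z * fker ((n : ℝ) + 2 * s) z) := by
  have hn : 1 ≤ n := Nat.one_le_iff_ne_zero.2 (NeZero.ne n)
  have hnt : Nontrivial (Eucl n) := by
    have : Nonempty (Fin n) := ⟨0⟩
    infer_instance
  have key := integrable_fun_norm_addHaar (E := Eucl n) (volume : Measure (Eucl n))
    (f := fun r : ℝ => min 1 (r ^ 2) * (1 / r ^ ((n : ℝ) + 2 * s)))
  unfold q1 fker
  rw [key]
  have hdim : Module.finrank ℝ (Eucl n) = n := by simp
  rw [hdim]
  have hsplit : Ioi (0 : ℝ) = Ioc 0 1 ∪ Ioi 1 := by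
    rw [Ioc_union_Ioi_eq_Ioi zero_le_one]
  have hpow : ∀ y : ℝ, 0 < y → y ^ (n - 1) = y ^ ((n : ℝ) - 1) := by
    intro y hy
    rw [← Real.rpow_natCast, Nat.cast_sub hn]; simp
  rw [hsplit]
  apply IntegrableOn.union
  · have h1 : IntegrableOn (fun y : ℝ => y ^ (1 - 2 * s)) (Ioc 0 1) := by
      have := intervalIntegral.intervalIntegrable_rpow' (a := 0) (b := 1) (r := 1 - 2 * s) (by linarith)
      rwa [intervalIntegrable_iff_integrableOn_Ioc_of_le zero_le_one] at this
    refine h1.congr_fun ?_ measurableSet_Ioc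
    intro y hy
    have hy0 : 0 < y := hy.1
    have : min 1 (y ^ 2) = y ^ 2 := min_eq_right (by nlinarith [hy.2])
    simp only [smul_eq_mul, this, hpow y hy0, one_div]
    rw [← Real.rpow_natCast y 2, ← Real.rpow_neg hy0.le, ← Real.rpow_add hy0, ← Real.rpow_add hy0]
    congr 1; push_cast; ring
  · have h1 : IntegrableOn (fun y : ℝ => y ^ (-1 - 2 * s)) (Ioi 1) :=
      integrableOn_Ioi_rpow_of_lt (by linarith) zero_lt_one
    refine h1.congr_fun ?_ measurableSet_Ioi
    intro y hy
    have hy1 : 1 < y := hy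
    have hy0 : 0 < y := by linarith
    have : min 1 (y ^ 2) = 1 := min_eq_left (by nlinarith)
    simp only [smul_eq_mul, this, hpow y hy0, one_div, one_mul]
    rw [← Real.rpow_neg hy0.le, ← Real.rpow_add hy0]
    congr 1; ring

lemma q1_le_one {n : ℕ} (z : Eucl n) : q1 z ≤ 1 := min_le_left _ _
lemma q1_le_sq {n : ℕ} (z : Eucl n) : q1 z ≤ ‖z‖ ^ 2 := min_le_right _ _

/-- bound for second differences from Lipschitz gradient -/
lemma d2_le_of_lip {n : ℕ} {v : Eucl n → ℝ} {x : Eucl n} {r : ℝ} {K : NNReal}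
    (hd : DifferentiableOn ℝ v (ball x r)) (hK : LipschitzOnWith K (fderiv ℝ v) (ball x r))
    {z : Eucl n} (hz : ‖z‖ < r) : |d2 v x z| ≤ 2 * K * ‖z‖ ^ 2 := by
  have hmem : ∀ τ ∈ Icc (0 : ℝ) 1, x + τ • z ∈ ball x r ∧ x - τ • z ∈ ball x r := by
    intro τ hτ
    have : ‖τ • z‖ < r := by
      rw [norm_smul, Real.norm_of_nonneg hτ.1]
      have := mul_le_mul_of_nonneg_right hτ.2 (norm_nonneg z)
      linarith
    constructor <;> simpa [mem_ball, dist_eq_norm] using this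
  have hder : ∀ y ∈ ball x r, HasFDerivAt v (fderiv ℝ v y) y := fun y hy =>
    ((hd y hy).differentiableAt (isOpen_ball.mem_nhds hy)).hasFDerivAt
  have hg : ∀ τ ∈ Icc (0 : ℝ) 1, HasDerivWithinAt (fun τ : ℝ => v (x + τ • z) + v (x - τ • z))
      (fderiv ℝ v (x + τ • z) z - fderiv ℝ v (x - τ • z) z) (Icc 0 1) τ := by
    intro τ hτ
    obtain ⟨h1, h2⟩ := hmem τ hτ
    have e1 : HasDerivAt (fun τ : ℝ => x + τ • z) z τ := by
      simpa using ((hasDerivAt_id τ).smul_const z).const_add x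
    have e2 : HasDerivAt (fun τ : ℝ => x - τ • z) (-z) τ := by
      simpa using ((hasDerivAt_id τ).smul_const z).const_sub x
    have f1 := (hder _ h1).comp_hasDerivAt τ e1
    have f2 := (hder _ h2).comp_hasDerivAt τ e2
    have := (f1.add f2).hasDerivWithinAt (s := Icc 0 1)
    have e : fderiv ℝ v (x + τ • z) z - fderiv ℝ v (x - τ • z) z
        = fderiv ℝ v (x + τ • z) z + fderiv ℝ v (x - τ • z) (-z) := by
      rw [map_neg]; exact sub_eq_add_neg _ _
    rw [e]
    exact this
  have hb : ∀ τ ∈ Ico (0 : ℝ) 1,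
      ‖fderiv ℝ v (x + τ • z) z - fderiv ℝ v (x - τ • z) z‖ ≤ 2 * K * ‖z‖ ^ 2 := by
    intro τ hτ
    obtain ⟨h1, h2⟩ := hmem τ ⟨hτ.1, hτ.2.le⟩
    have h3 := hK.dist_le_mul _ h1 _ h2
    rw [dist_eq_norm, dist_eq_norm] at h3
    have h4 : ‖x + τ • z - (x - τ • z)‖ ≤ 2 * ‖z‖ := by
      have : x + τ • z - (x - τ • z) = (2 * τ) • z := by
        rw [mul_smul, two_smul]; abel
      rw [this, norm_smul, Real.norm_of_nonneg (by linarith [hτ.1])]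
      have := mul_le_mul_of_nonneg_right hτ.2.le (norm_nonneg z)
      nlinarith
    rw [← sub_apply]
    calc _ ≤ ‖fderiv ℝ v (x + τ • z) - fderiv ℝ v (x - τ • z)‖ * ‖z‖ :=
          ContinuousLinearMap.le_opNorm _ _
      _ ≤ (K * (2 * ‖z‖)) * ‖z‖ := by
          gcongr
          exact h3.trans (by gcongr)
      _ = _ := by ring
  have := norm_image_sub_le_of_norm_deriv_le_segment' hg hb 1 (right_mem_Icc.2 zero_le_one)
  simp only [one_smul, zero_smul, add_zero, sub_zero, mul_one] at this
  rw [Real.norm_eq_abs] at this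
  have e : d2 v x z = -(v (x + z) + v (x - z) - (v x + v x)) := by unfold d2; ring
  rw [e, abs_neg]; exact this

lemma d2_le_of_bdd {n : ℕ} {v : Eucl n → ℝ} {M : ℝ} (hM : ∀ x, |v x| ≤ M) (x z : Eucl n) :
    |d2 v x z| ≤ 4 * M := by
  unfold d2
  have h1 := abs_le.1 (hM x)
  have h2 := abs_le.1 (hM (x + z))
  have h3 := abs_le.1 (hM (x - z))
  rw [abs_le]; constructor <;> linarith

/-- combine -/
lemma d2_le_q1 {n : ℕ} {v : Eucl n → ℝ} {M N : ℝ} (hM : ∀ x, |v x| ≤ M) {x z : Eucl n}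
    (hN : |d2 v x z| ≤ N * ‖z‖ ^ 2) : |d2 v x z| ≤ max N (4 * M) * q1 z := by
  unfold q1
  rcases le_total 1 (‖z‖ ^ 2) with h | h
  · rw [min_eq_left h, mul_one]
    exact (d2_le_of_bdd hM x z).trans (le_max_right _ _)
  · rw [min_eq_right h]
    exact hN.trans (by gcongr; exact le_max_left _ _)

/-- smooth compactly supported functions have controlled second differences -/
lemma d2_le_of_contDiff {n : ℕ} {v : Eucl n → ℝ} (hv : ContDiff ℝ 2 v) (hc : HasCompactSupport v) :
    ∃ A, 0 ≤ A ∧ ∀ x z, |d2 v x z| ≤ A * q1 z := by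
  obtain ⟨M, hM⟩ := hv.continuous.bounded_above_of_compact_support hc
  have h1 : ContDiff ℝ 1 (fderiv ℝ v) := hv.fderiv_right (by norm_num)
  obtain ⟨K, hK⟩ := h1.lipschitzWith_of_hasCompactSupport (hc.fderiv (𝕜 := ℝ)) (by simp)
  refine ⟨max (2 * K) (4 * M), le_trans (by positivity) (le_max_left _ _), fun x z => ?_⟩
  apply d2_le_q1 (by simpa using hM)
  exact d2_le_of_lip (r := ‖z‖ + 1) (hv.differentiable (by norm_num)).differentiableOn
    hK.lipschitzOnWith (by linarith)

/-- uniform second difference bounds on compact subsets -/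
lemma d2_le_of_C11 {n : ℕ} {Ω : Set (Eucl n)} {v : Eucl n → ℝ} {M : ℝ} (hM : ∀ x, |v x| ≤ M)
    (hv : C11loc Ω v) {S : Set (Eucl n)} (hS : IsCompact S) (hSΩ : S ⊆ Ω) :
    ∃ N : ℝ, 0 ≤ N ∧ ∀ x ∈ S, ∀ z, |d2 v x z| ≤ N * ‖z‖ ^ 2 := by
  have hM0 : 0 ≤ M := (abs_nonneg _).trans (hM 0)
  refine hS.induction_on (p := fun S => ∃ N : ℝ, 0 ≤ N ∧ ∀ x ∈ S, ∀ z, |d2 v x z| ≤ N * ‖z‖ ^ 2)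
    ⟨0, le_rfl, by simp⟩ ?_ ?_ ?_
  · rintro s t hst ⟨N, hN, h⟩
    exact ⟨N, hN, fun x hx => h x (hst hx)⟩
  · rintro s t ⟨N, hN, h⟩ ⟨N', hN', h'⟩
    refine ⟨max N N', hN.trans (le_max_left _ _), ?_⟩
    rintro x (hx | hx) z
    · exact (h x hx z).trans (by gcongr; exact le_max_left _ _)
    · exact (h' x hx z).trans (by gcongr; exact le_max_right _ _)
  · intro x hx
    obtain ⟨r, hr, -, hd, K, hK⟩ := hv x (hSΩ hx)
    refine ⟨ball x (r / 2), mem_nhdsWithin_of_mem_nhds (ball_mem_nhds x (by linarith)),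
      max (2 * (K : ℝ)) (4 * M / (r / 2) ^ 2), le_trans (by positivity) (le_max_left _ _), ?_⟩
    intro y hy z
    have hsub : ball y (r / 2) ⊆ ball x r := by
      apply ball_subset_ball'
      have : dist y x < r / 2 := hy
      linarith
    rcases lt_or_ge ‖z‖ (r / 2) with h | h
    · exact (d2_le_of_lip (hd.mono hsub) (hK.mono hsub) h).trans
        (by gcongr; exact le_max_left _ _)
    · refine (d2_le_of_bdd hM y z).trans ?_
      calc 4 * M = 4 * M / (r / 2) ^ 2 * (r / 2) ^ 2 := by field_simp
        _ ≤ max (2 * (K : ℝ)) (4 * M / (r / 2) ^ 2) * ‖z‖ ^ 2 := by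
          gcongr
          exact le_max_right _ _

/-- total mass of the weight -/
def IK (n : ℕ) (p : ℝ) : ℝ := ∫ z : Eucl n, q1 z * fker p z

lemma IK_nonneg (n : ℕ) (p : ℝ) : 0 ≤ IK n p :=
  integral_nonneg fun z => mul_nonneg (q1_nonneg z) (fker_nonneg p z)

lemma d2_meas {n : ℕ} {v : Eucl n → ℝ} (hv : Measurable v) (x : Eucl n) :
    Measurable (fun z => d2 v x z) := by
  unfold d2; fun_prop

lemma Lam_integrable {n : ℕ} {p A : ℝ} (hI : Integrable (fun z : Eucl n => q1 z * fker p z))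
    {v : Eucl n → ℝ} (hv : Measurable v) {x : Eucl n} (hA : ∀ z, |d2 v x z| ≤ A * q1 z) :
    Integrable (fun z => d2 v x z * fker p z) := by
  refine (hI.const_mul A).mono' ((d2_meas hv x).mul (fker_meas p)).aestronglyMeasurable ?_
  refine ae_of_all _ fun z => ?_
  rw [Real.norm_eq_abs, abs_mul, abs_of_nonneg (fker_nonneg p z), ← mul_assoc]
  exact mul_le_mul_of_nonneg_right (hA z) (fker_nonneg p z)

lemma Lam_abs_le {n : ℕ} {p A : ℝ} (hI : Integrable (fun z : Eucl n => q1 z * fker p z))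
    {v : Eucl n → ℝ} {x : Eucl n} (hA : ∀ z, |d2 v x z| ≤ A * q1 z) :
    |Lam p v x| ≤ A * IK n p := by
  unfold Lam IK
  rw [← integral_const_mul, ← Real.norm_eq_abs]
  apply norm_integral_le_of_norm_le (hI.const_mul A)
  refine ae_of_all _ fun z => ?_
  rw [Real.norm_eq_abs, abs_mul, abs_of_nonneg (fker_nonneg p z), ← mul_assoc]
  exact mul_le_mul_of_nonneg_right (hA z) (fker_nonneg p z)


/-- radial mollifiers of width `ε` -/
structure IsMol {n : ℕ} (ρ : Eucl n → ℝ) (ε : ℝ) : Prop where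
  pos : 0 < ε
  smooth : ContDiff ℝ 2 ρ
  nonneg : ∀ z, 0 ≤ ρ z
  zero : ∀ z, ε ≤ ‖z‖ → ρ z = 0
  int : ∫ z, ρ z = 1
  anti : ∀ y z, ‖y‖ ≤ ‖z‖ → ρ z ≤ ρ y

lemma exists_mol {n : ℕ} {ε : ℝ} (hε : 0 < ε) : ∃ ρ : Eucl n → ℝ, IsMol ρ ε := by
  let f : Eucl n → ℝ := fun z => Real.smoothTransition (1 - ‖z‖ ^ 2 / ε ^ 2)
  have hf : ContDiff ℝ 2 f := by
    apply (Real.smoothTransition.contDiff (n := 2)).comp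
    exact contDiff_const.sub ((contDiff_norm_sq ℝ).div_const _)
  have h0 : ∀ z, ε ≤ ‖z‖ → f z = 0 := by
    intro z hz
    apply Real.smoothTransition.zero_of_nonpos
    have : 1 ≤ ‖z‖ ^ 2 / ε ^ 2 := by
      rw [one_le_div (by positivity)]; gcongr
    linarith
  have hcs : HasCompactSupport f := by
    apply HasCompactSupport.of_support_subset_isCompact (isCompact_closedBall (0 : Eucl n) ε)
    intro z hz
    by_contra hc
    apply hz
    apply h0
    simp only [mem_closedBall, dist_zero_right, not_le] at hc
    exact hc.le
  have hintg : Integrable f := hf.continuous.integrable_of_hasCompactSupport hcs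
  have hnn : ∀ z, 0 ≤ f z := fun z => Real.smoothTransition.nonneg _
  have hpos : 0 < ∫ z, f z := by
    apply hf.continuous.integral_pos_of_hasCompactSupport_nonneg_nonzero hcs hnn (x := 0)
    simp [f]
  have hanti : ∀ y z, ‖y‖ ≤ ‖z‖ → f z ≤ f y := by
    intro y z hyz
    apply Real.smoothTransition.monotone
    gcongr
  clear_value f
  refine ⟨fun z => (∫ z, f z)⁻¹ * f z, hε, contDiff_const.mul hf, ?_, ?_, ?_, ?_⟩
  · intro z; have := hnn z; positivity
  · intro z hz; simp [h0 z hz]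
  · rw [integral_const_mul, inv_mul_cancel₀ hpos.ne']
  · intro y z hyz
    exact mul_le_mul_of_nonneg_left (hanti y z hyz) (by positivity)

namespace IsMol

variable {n : ℕ} {ρ : Eucl n → ℝ} {ε : ℝ}

lemma even (h : IsMol ρ ε) (z : Eucl n) : ρ (-z) = ρ z :=
  le_antisymm (h.anti _ _ (by simp)) (h.anti _ _ (by simp))

lemma cs (h : IsMol ρ ε) : HasCompactSupport ρ := by
  apply HasCompactSupport.of_support_subset_isCompact (isCompact_closedBall (0 : Eucl n) ε)
  intro z hz
  by_contra hc
  apply hz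
  apply h.zero
  simp only [mem_closedBall, dist_zero_right, not_le] at hc
  exact hc.le

lemma cont (h : IsMol ρ ε) : Continuous ρ := h.smooth.continuous

lemma integrable (h : IsMol ρ ε) : Integrable ρ := h.cont.integrable_of_hasCompactSupport h.cs

lemma le_zero (h : IsMol ρ ε) (z : Eucl n) : ρ z ≤ ρ 0 := h.anti _ _ (by simp)

lemma norm_lt (h : IsMol ρ ε) {z : Eucl n} (hz : ρ z ≠ 0) : ‖z‖ < ε := by
  by_contra! hc; exact hz (h.zero z hc)

lemma zero_pos (h : IsMol ρ ε) : 0 < ρ 0 := by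
  by_contra! hc
  have : ∀ z, ρ z = 0 := fun z => le_antisymm ((h.le_zero z).trans hc) (h.nonneg z)
  have h1 := h.int
  simp [this] at h1

end IsMol

/-- mollification -/
def mol {n : ℕ} (ρ v : Eucl n → ℝ) (x : Eucl n) : ℝ := ∫ y, ρ y * v (x - y)

section mol
variable {n : ℕ} {ρ : Eucl n → ℝ} {ε : ℝ}

lemma mol_eq (ρ v : Eucl n → ℝ) (x : Eucl n) : mol ρ v x = ∫ y, ρ (x - y) * v y := by
  unfold mol
  rw [← integral_sub_left_eq_self _ volume x]
  simp

lemma mol_int (h : IsMol ρ ε) {v : Eucl n → ℝ} (hv : Measurable v) {M : ℝ} (hM : ∀ x, |v x| ≤ M)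
    (x : Eucl n) : Integrable (fun y => ρ y * v (x - y)) := by
  refine (h.integrable.const_mul M).mono'
    ((h.cont.measurable).mul (hv.comp (by fun_prop))).aestronglyMeasurable (ae_of_all _ fun y => ?_)
  rw [Real.norm_eq_abs, abs_mul, abs_of_nonneg (h.nonneg y), mul_comm]
  exact mul_le_mul_of_nonneg_right (hM _) (h.nonneg y)

lemma mol_int' (h : IsMol ρ ε) {v : Eucl n → ℝ} (hv : Measurable v) {M : ℝ} (hM : ∀ x, |v x| ≤ M)
    (x : Eucl n) : Integrable (fun y => ρ (x - y) * v y) := by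
  have := (mol_int h hv hM x).comp_sub_left x
  simpa using this

lemma mol_mono_pt (h : IsMol ρ ε) {u v : Eucl n → ℝ} (hu : Measurable u) (hv : Measurable v)
    {M : ℝ} (hM : ∀ x, |u x| ≤ M) (hM' : ∀ x, |v x| ≤ M) {x : Eucl n}
    (hle : ∀ y, ρ y ≠ 0 → u (x - y) ≤ v (x - y)) : mol ρ u x ≤ mol ρ v x := by
  unfold mol
  apply integral_mono (mol_int h hu hM x) (mol_int h hv hM' x)
  intro y
  by_cases hy : ρ y = 0
  · simp [hy]
  · exact mul_le_mul_of_nonneg_left (hle y hy) (h.nonneg y)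

lemma mol_const (h : IsMol ρ ε) (c : ℝ) (x : Eucl n) : mol ρ (fun _ => c) x = c := by
  unfold mol; rw [integral_mul_const, h.int, one_mul]

/-- pointwise bound on a mollification -/
lemma mol_abs_le (h : IsMol ρ ε) {v : Eucl n → ℝ} {B : ℝ} {x : Eucl n}
    (hB : ∀ y, ρ y ≠ 0 → |v (x - y)| ≤ B) : |mol ρ v x| ≤ B := by
  unfold mol
  have : B = ∫ y, ρ y * B := by rw [integral_mul_const, h.int, one_mul]
  rw [this, ← Real.norm_eq_abs]
  apply norm_integral_le_of_norm_le (h.integrable.mul_const B)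
  refine ae_of_all _ fun y => ?_
  rw [Real.norm_eq_abs, abs_mul, abs_of_nonneg (h.nonneg y)]
  by_cases hy : ρ y = 0
  · simp [hy]
  · exact mul_le_mul_of_nonneg_left (hB y hy) (h.nonneg y)

lemma mol_ge (h : IsMol ρ ε) {v : Eucl n → ℝ} (hv : Measurable v) {M : ℝ} (hM : ∀ x, |v x| ≤ M)
    {c : ℝ} {x : Eucl n} (hB : ∀ y, ρ y ≠ 0 → c ≤ v (x - y)) : c ≤ mol ρ v x := by
  unfold mol
  have : c = ∫ y, ρ y * c := by rw [integral_mul_const, h.int, one_mul]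
  rw [this]
  apply integral_mono (h.integrable.mul_const c) (mol_int h hv hM x)
  intro y
  by_cases hy : ρ y = 0
  · simp [hy]
  · exact mul_le_mul_of_nonneg_left (hB y hy) (h.nonneg y)

lemma mol_approx {v : Eucl n → ℝ} (hv : Measurable v) {M : ℝ} (hM : ∀ x, |v x| ≤ M)
    {x : Eucl n} (hc : ContinuousAt v x) {δ : ℝ} (hδ : 0 < δ) :
    ∃ ε0 > 0, ∀ ρ ε, IsMol ρ ε → ε < ε0 → |mol ρ v x - v x| ≤ δ := by
  obtain ⟨ε0, h0, hb⟩ := Metric.continuousAt_iff.1 hc δ hδ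
  refine ⟨ε0, h0, fun ρ ε h hε => ?_⟩
  have e : mol ρ v x - v x = mol ρ (fun y => v y - v x) x := by
    have h1 : mol ρ (fun y => v y - v x) x = ∫ y, (ρ y * v (x - y) - ρ y * v x) := by
      unfold mol; simp only [mul_sub]
    rw [h1, integral_sub (mol_int h hv hM x) (h.integrable.mul_const _), integral_mul_const, h.int,
      one_mul, mol]
  rw [e]
  apply mol_abs_le h
  intro y hy
  have := hb (x := x - y) (by simpa [dist_eq_norm] using (h.norm_lt hy).trans hε)
  rw [Real.dist_eq] at this
  exact this.le

lemma mol_joint (h : IsMol ρ ε) {w : Eucl n → ℝ → ℝ} {M : ℝ}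
    (hmeas : ∀ t > 0, Measurable (fun x => w x t))
    (hM : ∀ x, ∀ t > 0, |w x t| ≤ M) (hc : ∀ x, ContinuousOn (w x) (Ioi 0)) :
    ContinuousOn (fun q : Eucl n × ℝ => mol ρ (fun x => w x q.2) q.1) (univ ×ˢ Ioi 0) := by
  rintro ⟨x0, t0⟩ ⟨-, ht0⟩
  simp only [mem_Ioi] at ht0
  apply ContinuousAt.continuousWithinAt
  simp only [mol_eq]
  have hev : ∀ᶠ q : Eucl n × ℝ in 𝓝 (x0, t0), q.1 ∈ ball x0 1 ∧ 0 < q.2 := by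
    apply ((isOpen_ball.prod isOpen_Ioi).mem_nhds (show (x0, t0) ∈ ball x0 1 ×ˢ Ioi 0 from
      ⟨mem_ball_self one_pos, ht0⟩))
  apply tendsto_integral_filter_of_dominated_convergence
    (bound := (closedBall x0 (1 + ε)).indicator (fun _ => ρ 0 * M))
  · filter_upwards [hev] with q hq
    exact ((h.cont.measurable.comp (by fun_prop)).mul (hmeas q.2 hq.2)).aestronglyMeasurable
  · filter_upwards [hev] with q hq
    refine ae_of_all _ fun y => ?_
    rw [Real.norm_eq_abs, abs_mul, abs_of_nonneg (h.nonneg _)]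
    have hM0 : 0 ≤ M := (abs_nonneg _).trans (hM y q.2 hq.2)
    by_cases hy : y ∈ closedBall x0 (1 + ε)
    · rw [indicator_of_mem hy]
      exact mul_le_mul (h.le_zero _) (hM y q.2 hq.2) (abs_nonneg _) ((h.nonneg 0))
    · rw [indicator_of_notMem hy]
      have : ρ (q.1 - y) = 0 := by
        apply h.zero
        rw [← dist_eq_norm]
        simp only [mem_closedBall, not_le] at hy
        have h1 : dist q.1 x0 < 1 := hq.1
        have h2 := dist_triangle y q.1 x0
        rw [dist_comm y q.1] at h2
        linarith
      simp [this]
  · rw [integrable_indicator_iff measurableSet_closedBall]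
    apply integrableOn_const
    exact (measure_closedBall_lt_top).ne
    exact enorm_ne_top
  · refine ae_of_all _ fun y => ?_
    apply Tendsto.mul
    · have : Continuous fun q : Eucl n × ℝ => ρ (q.1 - y) := h.cont.comp (by fun_prop)
      exact this.tendsto _
    · have h1 : ContinuousAt (w y) t0 := (hc y).continuousAt (Ioi_mem_nhds ht0)
      exact h1.tendsto.comp (continuous_snd.tendsto (x0, t0))

lemma mol_cont (h : IsMol ρ ε) {v : Eucl n → ℝ} (hv : Measurable v) {M : ℝ} (hM : ∀ x, |v x| ≤ M) :
    Continuous (mol ρ v) := by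
  have := mol_joint h (w := fun x _ => v x) (M := M) (fun _ _ => hv) (fun x _ _ => hM x)
    (fun x => continuousOn_const)
  have h2 : ContinuousOn (mol ρ v) univ := by
    apply this.comp (f := fun x : Eucl n => (x, (1 : ℝ))) (by fun_prop)
    intro x _; exact ⟨mem_univ _, by simp⟩
  exact continuousOn_univ.1 h2

lemma mol_d2 (h : IsMol ρ ε) {v : Eucl n → ℝ} (hv : Measurable v) {M : ℝ} (hM : ∀ x, |v x| ≤ M)
    (x z : Eucl n) : d2 (mol ρ v) x z = mol ρ (fun y => d2 v y z) x := by
  have e1 : mol ρ v (x + z) = ∫ y, ρ y * v (x - y + z) := by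
    unfold mol; congr 1; ext y; congr 2; abel
  have e2 : mol ρ v (x - z) = ∫ y, ρ y * v (x - y - z) := by
    unfold mol; congr 1; ext y; congr 2; abel
  have i0 := mol_int h hv hM x
  have i1 := mol_int h (v := fun y => v (y + z)) (hv.comp (by fun_prop)) (fun x => hM _) x
  have i2 := mol_int h (v := fun y => v (y - z)) (hv.comp (by fun_prop)) (fun x => hM _) x
  unfold d2
  rw [e1, e2]
  unfold mol
  rw [← integral_const_mul, ← integral_sub (i0.const_mul 2) i1, ← integral_sub _ i2]
  · congr 1; ext y; ring
  · exact (i0.const_mul 2).sub i1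

lemma mol_d2_bound (h : IsMol ρ ε) : ∃ A, 0 ≤ A ∧ ∀ (v : Eucl n → ℝ), Measurable v → ∀ M,
    (∀ x, |v x| ≤ M) → ∀ x z, |d2 (mol ρ v) x z| ≤ M * A * q1 z := by
  obtain ⟨A, hA0, hA⟩ := d2_le_of_contDiff h.smooth h.cs
  let V : ℝ := ((volume : Measure (Eucl n)) (closedBall 0 (ε + 1))).toReal
  refine ⟨max 4 (A * V), le_trans (by norm_num) (le_max_left _ _), fun v hv M hM x z => ?_⟩
  have hM0 : 0 ≤ M := (abs_nonneg _).trans (hM 0)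
  have hb : ∀ x, |mol ρ v x| ≤ M := fun x => mol_abs_le h (fun y _ => hM _)
  rcases le_or_gt 1 ‖z‖ with hz | hz
  · have : q1 z = 1 := min_eq_left (by nlinarith)
    rw [this, mul_one]
    calc _ ≤ 4 * M := d2_le_of_bdd hb x z
      _ ≤ _ := by rw [mul_comm]; gcongr; exact le_max_left _ _
  · have e : d2 (mol ρ v) x z = ∫ y, d2 ρ (x - y) z * v y := by
      have e1 : mol ρ v (x + z) = ∫ y, ρ (x - y + z) * v y := by
        rw [mol_eq]; congr 1; ext y; congr 2; abel
      have e2 : mol ρ v (x - z) = ∫ y, ρ (x - y - z) * v y := by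
        rw [mol_eq]; congr 1; ext y; congr 2; abel
      have i0 := mol_int' h hv hM x
      have i1 : Integrable fun y => ρ (x - y + z) * v y := by
        have := mol_int' h hv hM (x + z)
        refine this.congr (ae_of_all _ fun y => ?_)
        simp only; congr 2; abel
      have i2 : Integrable fun y => ρ (x - y - z) * v y := by
        have := mol_int' h hv hM (x - z)
        refine this.congr (ae_of_all _ fun y => ?_)
        simp only; congr 2; abel
      unfold d2
      rw [e1, e2, mol_eq, ← integral_const_mul, ← integral_sub (i0.const_mul 2) i1,
        ← integral_sub _ i2]
      · congr 1; ext y; ring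
      · exact (i0.const_mul 2).sub i1
    have hintg : Integrable ((closedBall x (ε + 1)).indicator (fun _ => A * q1 z * M)) := by
      rw [integrable_indicator_iff measurableSet_closedBall]
      apply integrableOn_const
      exact (measure_closedBall_lt_top).ne
      exact enorm_ne_top
    have hle : |d2 (mol ρ v) x z| ≤
        ∫ y, (closedBall x (ε + 1)).indicator (fun _ => A * q1 z * M) y := by
      rw [e, ← Real.norm_eq_abs]
      apply norm_integral_le_of_norm_le hintg
      refine ae_of_all _ fun y => ?_
      rw [Real.norm_eq_abs, abs_mul]
      by_cases hy : y ∈ closedBall x (ε + 1)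
      · rw [indicator_of_mem hy]
        exact mul_le_mul (hA _ _) (hM y) (abs_nonneg _) (mul_nonneg hA0 (q1_nonneg z))
      · rw [indicator_of_notMem hy]
        simp only [mem_closedBall, not_le, dist_comm y x, dist_eq_norm] at hy
        have h0 : ρ (x - y) = 0 := h.zero _ (by linarith)
        have h1 : ρ (x - y + z) = 0 := h.zero _ (by
          have := norm_sub_norm_le (x - y) (-z)
          rw [norm_neg, sub_neg_eq_add] at this; linarith)
        have h2 : ρ (x - y - z) = 0 := h.zero _ (by
          have := norm_sub_norm_le (x - y) z
          linarith)
        simp [d2, h0, h1, h2]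
    rw [integral_indicator measurableSet_closedBall, setIntegral_const, smul_eq_mul] at hle
    have hVe : (volume : Measure (Eucl n)).real (closedBall x (ε + 1)) = V := by
      simp only [V, Measure.real]
      rw [← Measure.addHaar_closedBall_center]
    rw [hVe] at hle
    calc _ ≤ V * (A * q1 z * M) := hle
      _ = M * (A * V) * q1 z := by ring
      _ ≤ _ := by
        have := q1_nonneg z
        gcongr; exact le_max_right _ _

lemma mol_Lam {p A : ℝ} (hI : Integrable (fun z : Eucl n => q1 z * fker p z)) (h : IsMol ρ ε)
    {v : Eucl n → ℝ} (hv : Measurable v) {M : ℝ} (hM : ∀ x, |v x| ≤ M) {x : Eucl n}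
    (hA : ∀ y, ρ y ≠ 0 → ∀ z, |d2 v (x - y) z| ≤ A * q1 z) :
    Lam p (mol ρ v) x = ∫ y, ρ y * Lam p v (x - y) ∧
    Integrable (fun y => ρ y * Lam p v (x - y)) := by
  have hintg : Integrable (fun q : Eucl n × Eucl n => ρ q.1 * (d2 v (x - q.1) q.2 * fker p q.2))
      ((volume : Measure (Eucl n)).prod volume) := by
    have hb := (h.integrable.mul_prod (hI.const_mul A))
    refine hb.mono' ?_ (ae_of_all _ ?_)
    · apply Measurable.aestronglyMeasurable
      apply (h.cont.measurable.comp measurable_fst).mul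
      apply Measurable.mul _ ((fker_meas p).comp measurable_snd)
      unfold d2
      apply Measurable.sub (Measurable.sub (Measurable.const_mul _ _) _)
      · exact hv.comp (by fun_prop)
      · exact hv.comp (by fun_prop)
      · exact hv.comp (by fun_prop)
    · rintro ⟨y, z⟩
      simp only [norm_mul, Real.norm_eq_abs, abs_of_nonneg (h.nonneg y),
        abs_of_nonneg (fker_nonneg p z)]
      by_cases hy : ρ y = 0
      · simp [hy]
      · apply mul_le_mul_of_nonneg_left _ (h.nonneg y)
        rw [← mul_assoc]
        exact mul_le_mul_of_nonneg_right (hA y hy z) (fker_nonneg p z)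
  have hL : ∀ y, ρ y * Lam p v (x - y) = ∫ z, ρ y * (d2 v (x - y) z * fker p z) := by
    intro y; rw [integral_const_mul]; rfl
  constructor
  · simp only [hL]
    rw [integral_integral_swap hintg]
    unfold Lam
    congr 1; ext z
    rw [mol_d2 h hv hM, mol, ← integral_mul_const]
    congr 1; ext y; ring
  · simp only [hL]
    exact hintg.integral_prod_left

lemma Lam_mol_cont {p : ℝ} (hI : Integrable (fun z : Eucl n => q1 z * fker p z)) (h : IsMol ρ ε)
    {w : Eucl n → ℝ → ℝ} {M : ℝ}
    (hmeas : ∀ t > 0, Measurable (fun x => w x t))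
    (hM : ∀ x, ∀ t > 0, |w x t| ≤ M) (hc : ∀ x, ContinuousOn (w x) (Ioi 0)) (x : Eucl n) :
    ContinuousOn (fun t => Lam p (mol ρ (fun y => w y t)) x) (Ioi 0) := by
  obtain ⟨A, hA0, hA⟩ := mol_d2_bound h
  have hj := mol_joint h hmeas hM hc
  have hct : ∀ y, ∀ t > 0, ContinuousAt (fun t => mol ρ (fun y => w y t) y) t := by
    intro y t ht
    have : ContinuousOn (fun t => mol ρ (fun y => w y t) y) (Ioi 0) :=
      hj.comp (f := fun t : ℝ => (y, t)) (by fun_prop) (fun t ht => ⟨mem_univ _, ht⟩)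
    exact this.continuousAt (Ioi_mem_nhds ht)
  intro t0 ht0
  have ht0 : 0 < t0 := ht0
  apply ContinuousAt.continuousWithinAt
  unfold Lam
  have hev : ∀ᶠ t in 𝓝 t0, 0 < t := lt_mem_nhds ht0
  apply tendsto_integral_filter_of_dominated_convergence
    (bound := fun z => M * A * (q1 z * fker p z))
  · filter_upwards [hev] with t ht
    have := (mol_cont h (hmeas t ht) (fun x => hM x t ht)).measurable
    exact ((d2_meas this x).mul (fker_meas p)).aestronglyMeasurable
  · filter_upwards [hev] with t ht
    refine ae_of_all _ fun z => ?_
    rw [Real.norm_eq_abs, abs_mul, abs_of_nonneg (fker_nonneg p z), ← mul_assoc]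
    exact mul_le_mul_of_nonneg_right (hA _ (hmeas t ht) M (fun x => hM x t ht) x z)
      (fker_nonneg p z)
  · exact hI.const_mul _
  · refine ae_of_all _ fun z => ?_
    apply Tendsto.mul_const
    unfold d2
    exact (((hct x t0 ht0).const_mul 2).sub (hct (x + z) t0 ht0)).sub (hct (x - z) t0 ht0)

end mol


/-- The hypotheses used for the regularity in time. -/
structure TR {n : ℕ} (Ω : Set (Eucl n)) (p κ C M : ℝ) (w w' : Eucl n → ℝ → ℝ) : Prop where
  hI : Integrable (fun z : Eucl n => q1 z * fker p z)
  hκ : 0 ≤ κ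
  hC : 0 ≤ C
  hM0 : 0 ≤ M
  hmeas : ∀ t > 0, Measurable (fun x => w x t)
  hM : ∀ x, ∀ t > 0, |w x t| ≤ M
  hc : ∀ x, ContinuousOn (w x) (Ioi 0)
  hder : ∀ x ∈ Ω, ∀ t > 0, HasDerivAt (w x) (w' x t) t
  hd2 : ∀ t > 0, ∀ S : Set (Eucl n), IsCompact S → S ⊆ Ω →
    ∃ N, 0 ≤ N ∧ ∀ x ∈ S, ∀ z, |d2 (fun y => w y t) x z| ≤ N * ‖z‖ ^ 2
  heq : ∀ x ∈ Ω, ∀ t > 0, |w' x t + κ * Lam p (fun y => w y t) x| ≤ C * |w x t|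
  hxc : ∀ t > 0, ∀ x ∈ Ω, ContinuousAt (fun y => w y t) x

lemma d2_fneg {n : ℕ} (v : Eucl n → ℝ) (x z : Eucl n) : d2 (fun y => - v y) x z = - d2 v x z := by
  unfold d2; ring

lemma Lam_fneg {n : ℕ} (p : ℝ) (v : Eucl n → ℝ) (x : Eucl n) :
    Lam p (fun y => - v y) x = - Lam p v x := by
  unfold Lam; simp only [d2_fneg, neg_mul, integral_neg]

lemma mol_fneg {n : ℕ} (ρ v : Eucl n → ℝ) (x : Eucl n) :
    mol ρ (fun y => - v y) x = - mol ρ v x := by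
  unfold mol; simp only [mul_neg, integral_neg]

section TR
variable {n : ℕ} {Ω : Set (Eucl n)} {p κ C M : ℝ} {w w' : Eucl n → ℝ → ℝ}

lemma TR.neg (h : TR Ω p κ C M w w') :
    TR Ω p κ C M (fun x t => - w x t) (fun x t => - w' x t) where
  hI := h.hI
  hκ := h.hκ
  hC := h.hC
  hM0 := h.hM0
  hmeas t ht := (h.hmeas t ht).neg
  hM x t ht := by rw [abs_neg]; exact h.hM x t ht
  hc x := (h.hc x).neg
  hder x hx t ht := (h.hder x hx t ht).neg
  hd2 t ht S hS hS' := by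
    obtain ⟨N, h0, hN⟩ := h.hd2 t ht S hS hS'
    refine ⟨N, h0, fun x hx z => ?_⟩
    rw [d2_fneg, abs_neg]; exact hN x hx z
  heq x hx t ht := by
    rw [Lam_fneg, abs_neg]
    have := h.heq x hx t ht
    rw [← abs_neg] at this
    convert this using 2; ring
  hxc t ht x hx := (h.hxc t ht x hx).neg

/-- the lower bound for the time derivative of the mollification -/
def HH (p κ C : ℝ) (w : Eucl n → ℝ → ℝ) (ρ : Eucl n → ℝ) (x : Eucl n) (t : ℝ) : ℝ :=
  -κ * Lam p (mol ρ (fun y => w y t)) x - C * mol ρ (fun y => |w y t|) x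

lemma HH_cont (h : TR Ω p κ C M w w') {ρ : Eucl n → ℝ} {ε : ℝ} (hρ : IsMol ρ ε) (x : Eucl n) :
    ContinuousOn (HH p κ C w ρ x) (Ioi 0) := by
  unfold HH
  apply ContinuousOn.sub
  · exact continuousOn_const.mul (Lam_mol_cont h.hI hρ h.hmeas h.hM h.hc x)
  · have hj := mol_joint hρ (w := fun x t => |w x t|) (M := M) (fun t ht => (h.hmeas t ht).abs)
      (fun x t ht => by rw [abs_abs]; exact h.hM x t ht) (fun x => (h.hc x).abs)
    have : ContinuousOn (fun t => mol ρ (fun y => |w y t|) x) (Ioi 0) :=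
      hj.comp (f := fun t : ℝ => (x, t)) (by fun_prop) (fun t ht => ⟨mem_univ _, ht⟩)
    exact continuousOn_const.mul this

lemma molt_cont (h : TR Ω p κ C M w w') {ρ : Eucl n → ℝ} {ε : ℝ} (hρ : IsMol ρ ε) (x : Eucl n) :
    ContinuousOn (fun t => mol ρ (fun y => w y t) x) (Ioi 0) :=
  (mol_joint hρ h.hmeas h.hM h.hc).comp (f := fun t : ℝ => (x, t)) (by fun_prop)
    (fun t ht => ⟨mem_univ _, ht⟩)

/-- the one-sided inequality at time `t` for all mollifiers inside the ball -/
def Fin1 (p κ C : ℝ) (w : Eucl n → ℝ → ℝ) (x0 : Eucl n) (R : ℝ) (t : ℝ) : Prop :=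
  ∀ x ρ ε, IsMol ρ ε → dist x x0 + ε < R →
    DiniGE (fun τ => mol ρ (fun y => w y τ) x) t (HH p κ C w ρ x t)

lemma Lam_le_of_d2 {u : Eucl n → ℝ} {x : Eucl n} {c : ℝ}
    (hI : Integrable (fun z : Eucl n => q1 z * fker p z))
    (hu : Integrable (fun z => d2 u x z * fker p z))
    (hle : ∀ z, d2 u x z ≤ c * q1 z) : Lam p u x ≤ c * IK n p := by
  unfold Lam IK
  rw [← integral_const_mul]
  apply integral_mono hu (hI.const_mul c)
  intro z
  simp only
  rw [← mul_assoc]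
  exact mul_le_mul_of_nonneg_right (hle z) (fker_nonneg p z)

lemma mol_Lam_int (h : TR Ω p κ C M w w') {ρ : Eucl n → ℝ} {ε : ℝ} (hρ : IsMol ρ ε)
    {t : ℝ} (ht : 0 < t) (x : Eucl n) :
    Integrable (fun z => d2 (mol ρ (fun y => w y t)) x z * fker p z) := by
  obtain ⟨A, hA0, hA⟩ := mol_d2_bound hρ
  apply Lam_integrable h.hI (A := M * A)
  · exact (mol_cont hρ (h.hmeas t ht) (fun x => h.hM x t ht)).measurable
  · exact hA _ (h.hmeas t ht) M (fun x => h.hM x t ht) x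

lemma ahl_gap (x0 : Eucl n) {R' R N : ℝ} (hκ : 0 ≤ κ) (hC : 0 ≤ C) (hM0 : 0 ≤ M)
    (hR' : 0 < R') (hR : R' < R) (hN0 : 0 ≤ N) :
    ∃ C', κ * (max N (4 * M) * IK n p) + C * M ≤ C' ∧
    ∀ w w' : Eucl n → ℝ → ℝ, TR Ω p κ C M w w' → closedBall x0 R' ⊆ Ω → ∀ a b, 0 < a →
      (∀ x ∈ ball x0 R, ∀ z, |d2 (fun y => w y a) x z| ≤ N * ‖z‖ ^ 2) →
      (∀ t ∈ Ioo a b, Fin1 p κ C w x0 R t) →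
      ∀ x ∈ closedBall x0 R', ∀ T ∈ Ioo a b, -C' * (T - a) ≤ w x T - w x a := by
  let f : ContDiffBump x0 := ⟨R', (R + R') / 2, hR', by linarith⟩
  obtain ⟨A, hA0, hA⟩ := d2_le_of_contDiff (f.contDiff (n := 2)) f.hasCompactSupport
  have hIK := IK_nonneg n p
  have hmx : 0 ≤ max N (4 * M) := hN0.trans (le_max_left _ _)
  set C2 : ℝ := κ * ((max N (4 * M) + 3 * M * A) * IK n p) + C * M + 1 with hC2
  have hC2le : κ * (max N (4 * M) * IK n p) + C * M ≤ C2 := by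
    have : κ * (max N (4 * M) * IK n p) ≤ κ * ((max N (4 * M) + 3 * M * A) * IK n p) := by
      gcongr
      have : 0 ≤ 3 * M * A := by positivity
      linarith
    linarith
  have hC20 : 0 ≤ C2 := le_trans (by positivity) hC2le
  refine ⟨C2, hC2le, fun w w' h hΩ a b ha hN hfin x hx T hT => ?_⟩
  have key : ∀ ρ ε η, IsMol ρ ε → ε < (R - R') / 2 → 0 < η →
      0 < mol ρ (fun y => w y T) x - mol ρ (fun y => w y a) x + C2 * (T - a) + η := by
    intro ρ ε η hρ hε hη
    let u : Eucl n → ℝ → ℝ := fun x t => mol ρ (fun y => w y t) x - mol ρ (fun y => w y a) x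
      + C2 * (t - a) + 3 * M * (1 - f x) + η
    have hmol : ∀ t > 0, ∀ x, |mol ρ (fun y => w y t) x| ≤ M := fun t ht x =>
      mol_abs_le hρ (fun y _ => h.hM _ t ht)
    have hcont : ContinuousOn (fun q : Eucl n × ℝ => u q.1 q.2)
        (closedBall x0 ((R + R') / 2) ×ˢ Icc a T) := by
      have h1 : ContinuousOn (fun q : Eucl n × ℝ => mol ρ (fun x => w x q.2) q.1)
        (closedBall x0 ((R + R') / 2) ×ˢ Icc a T) :=
        (mol_joint hρ h.hmeas h.hM h.hc).mono (fun q hq => ⟨mem_univ _, lt_of_lt_of_le ha hq.2.1⟩)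
      have h2 : Continuous (mol ρ (fun y => w y a)) :=
        mol_cont hρ (h.hmeas a ha) (fun x => h.hM x a ha)
      have h3 : Continuous f := f.continuous
      have h4 : Continuous (fun q : Eucl n × ℝ => - mol ρ (fun y => w y a) q.1
          + C2 * (q.2 - a) + 3 * M * (1 - f q.1) + η) := by fun_prop
      refine (h1.add h4.continuousOn).congr ?_
      intro q _; simp only [u, Pi.add_apply]; ring
    have hfin := ahl_first_touch (X := closedBall x0 ((R + R') / 2)) (a := a) (T := T) (u := u)
      (isCompact_closedBall _ _) hcont ?_ ?_ x ?_ T ⟨hT.1.le, le_rfl⟩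
    · have : f x = 1 := f.one_of_mem_closedBall hx
      simp only [u, this] at hfin
      linarith
    · intro x _
      have : 0 ≤ 1 - f x := by linarith [f.le_one (x := x)]
      have : 0 ≤ 3 * M * (1 - f x) := by positivity
      simp only [u]; linarith
    · intro t ht y hy hu0 huge
      have ht0 : 0 < t := ha.trans ht.1
      have htb : t < b := lt_of_le_of_lt ht.2 hT.2
      have hglob : ∀ z, 0 ≤ u z t := by
        intro z
        by_cases hz : z ∈ closedBall x0 ((R + R') / 2)
        · exact huge z hz
        · have : f z = 0 := f.zero_of_le_dist (by
            simp only [mem_closedBall, not_le] at hz; exact hz.le)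
          have h1 := abs_le.1 (hmol t ht0 z)
          have h2 := abs_le.1 (hmol a ha z)
          have h3 : 0 ≤ C2 * (t - a) := mul_nonneg hC20 (by linarith [ht.1])
          simp only [u, this]
          linarith
      have hd : ∀ z, d2 (mol ρ (fun y => w y t)) y z ≤ (max N (4 * M) + 3 * M * A) * q1 z := by
        intro z
        have e : d2 (mol ρ (fun y => w y t)) y z = d2 (mol ρ (fun y => w y a)) y z
            + 3 * M * d2 f y z + (2 * u y t - u (y + z) t - u (y - z) t) := by
          simp only [d2, u]; ring
        have h1 : |d2 (mol ρ (fun y => w y a)) y z| ≤ max N (4 * M) * q1 z := by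
          rw [mol_d2 hρ (h.hmeas a ha) (fun x => h.hM x a ha)]
          apply mol_abs_le hρ
          intro y' hy'
          apply d2_le_q1 (fun x => h.hM x a ha)
          apply hN
          have h5 := hρ.norm_lt hy'
          simp only [mem_closedBall] at hy
          have h6 : dist (y - y') x0 ≤ dist y x0 + ‖y'‖ := by
            have := dist_triangle (y - y') y x0
            simp only [dist_self_sub_left] at this
            linarith
          rw [mem_ball]; linarith
        have h2 := hA y z
        have h1' := (abs_le.1 h1).2
        have h2' := (abs_le.1 h2).2
        have h3 : 3 * M * d2 f y z ≤ 3 * M * (A * q1 z) := by gcongr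
        have h4 := hglob (y + z)
        have h5 := hglob (y - z)
        rw [e, hu0]
        linarith
      have hL := Lam_le_of_d2 h.hI (mol_Lam_int h hρ ht0 y) hd
      have hH : -C2 < HH p κ C w ρ y t := by
        unfold HH
        have h1 : κ * Lam p (mol ρ (fun y => w y t)) y ≤
          κ * ((max N (4 * M) + 3 * M * A) * IK n p) := by gcongr
        have h2 : mol ρ (fun y => |w y t|) y ≤ M := (le_abs_self _).trans
          (mol_abs_le hρ (fun z _ => by rw [abs_abs]; exact h.hM _ t ht0))
        have h3 : C * mol ρ (fun y => |w y t|) y ≤ C * M := by gcongr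
        rw [hC2]; linarith
      have hsub : Ioo a b ⊆ Ioi 0 := fun τ hτ => ha.trans hτ.1
      obtain ⟨t', ht', hle⟩ := ahl_left (g := fun τ => mol ρ (fun y => w y τ) y)
        (H := HH p κ C w ρ y) (α := a) (β := b) (t := t) (r := -C2)
        ((molt_cont h hρ y).mono hsub) ((HH_cont h hρ y).mono hsub)
        (fun τ hτ => hfin τ hτ y ρ ε hρ (by
          simp only [mem_closedBall] at hy; linarith)) ⟨ht.1, htb⟩ hH
      refine ⟨t', ⟨ht'.1.le, ht'.2⟩, ?_⟩
      simp only [u] at hu0 ⊢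
      linarith
    · apply closedBall_subset_closedBall _ hx; linarith
  have hxΩ := hΩ hx
  have hT0 : 0 < T := ha.trans hT.1
  apply le_of_forall_pos_le_add
  intro δ hδ
  obtain ⟨e1, he1, hm1⟩ := mol_approx (h.hmeas T hT0) (fun x => h.hM x T hT0)
    (h.hxc T hT0 x hxΩ) (δ := δ / 3) (by positivity)
  obtain ⟨e2, he2, hm2⟩ := mol_approx (h.hmeas a ha) (fun x => h.hM x a ha)
    (h.hxc a ha x hxΩ) (δ := δ / 3) (by positivity)
  have hε : 0 < min (min e1 e2) ((R - R') / 2) / 2 := by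
    have : 0 < R - R' := by linarith
    positivity
  obtain ⟨ρ, hρ⟩ := exists_mol (n := n) hε
  have hlt : min (min e1 e2) ((R - R') / 2) / 2 < min (min e1 e2) ((R - R') / 2) := by linarith
  have k := key ρ _ (δ / 3) hρ (hlt.trans_le (min_le_right _ _)) (by positivity)
  have k1 := abs_le.1 (hm1 ρ _ hρ (hlt.trans_le ((min_le_left _ _).trans (min_le_left _ _))))
  have k2 := abs_le.1 (hm2 ρ _ hρ (hlt.trans_le ((min_le_left _ _).trans (min_le_right _ _))))
  linarith [k1.1, k1.2, k2.1, k2.2]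

end TR


section TR
variable {n : ℕ} {Ω : Set (Eucl n)} {p κ C M : ℝ} {w w' : Eucl n → ℝ → ℝ}

/-- one-sided Lipschitz bounds in time give the Dini inequality -/
lemma fin1_of_lip (h : TR Ω p κ C M w w') {x : Eucl n} {ρ : Eucl n → ℝ} {ε : ℝ} (hρ : IsMol ρ ε)
    (hΩ : closedBall x ε ⊆ Ω) {t K : ℝ} (ht : 0 < t)
    (hL : ∀ᶠ τ in 𝓝[>] t, ∀ y ∈ closedBall x ε, |w y τ - w y t| ≤ K * (τ - t)) :
    DiniGE (fun τ => mol ρ (fun y => w y τ) x) t (HH p κ C w ρ x t) := by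
  have hpt : ∀ y, ρ y ≠ 0 → x - y ∈ closedBall x ε := by
    intro y hy
    have := hρ.norm_lt hy
    simpa [dist_eq_norm] using this.le
  have hev : ∀ᶠ τ in 𝓝[>] t, t < τ := self_mem_nhdsWithin
  have hmτ : ∀ τ, t < τ → Measurable (fun y => ρ y * ((w (x - y) τ - w (x - y) t) / (τ - t))) := by
    intro τ hτ
    apply hρ.cont.measurable.mul
    apply Measurable.div_const
    exact ((h.hmeas τ (ht.trans hτ)).comp (by fun_prop)).sub ((h.hmeas t ht).comp (by fun_prop))
  have hlim : ∀ y, Tendsto (fun τ => ρ y * ((w (x - y) τ - w (x - y) t) / (τ - t))) (𝓝[>] t)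
      (𝓝 (ρ y * w' (x - y) t)) := by
    intro y
    by_cases hy : ρ y = 0
    · simp [hy]
    · apply Tendsto.const_mul
      have := hasDerivWithinAt_iff_tendsto_slope.1
        ((h.hder (x - y) (hΩ (hpt y hy)) t ht).hasDerivWithinAt (s := Ioi t))
      simp only [mem_Ioi, lt_irrefl, not_false_eq_true, sdiff_singleton_eq_self] at this
      refine this.congr fun τ => ?_
      rw [slope_def_field]
  have hmeas : AEStronglyMeasurable (fun y => ρ y * w' (x - y) t) volume := by
    obtain ⟨τ, hτ⟩ := exists_seq_tendsto (𝓝[>] t)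
    have hτ2 : ∀ᶠ k in atTop, t < τ k := hτ.eventually hev
    obtain ⟨k0, hk0⟩ := eventually_atTop.1 hτ2
    have hτ3 : Tendsto (fun k => τ (k + k0)) atTop (𝓝[>] t) := (tendsto_add_atTop_iff_nat k0).2 hτ
    refine aestronglyMeasurable_of_tendsto_ae atTop
      (f := fun k y => ρ y * ((w (x - y) (τ (k + k0)) - w (x - y) t) / (τ (k + k0) - t)))
      (fun k => (hmτ _ (hk0 _ (by omega))).aestronglyMeasurable)
      (ae_of_all _ fun y => (hlim y).comp hτ3)
  have hbd : ∀ᶠ τ in 𝓝[>] t, ∀ y, ‖ρ y * ((w (x - y) τ - w (x - y) t) / (τ - t))‖ ≤ K * ρ y := by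
    filter_upwards [hL, hev] with τ hτ htτ y
    by_cases hy : ρ y = 0
    · simp [hy]
    · rw [Real.norm_eq_abs, abs_mul, abs_of_nonneg (hρ.nonneg y), mul_comm]
      apply mul_le_mul_of_nonneg_right _ (hρ.nonneg y)
      rw [abs_div, abs_of_pos (sub_pos.2 htτ), div_le_iff₀ (sub_pos.2 htτ)]
      exact hτ _ (hpt y hy)
  have hintg' : Integrable (fun y => ρ y * w' (x - y) t) := by
    refine (hρ.integrable.const_mul K).mono' hmeas (ae_of_all _ fun y => ?_)
    exact le_of_tendsto (hlim y).norm (hbd.mono fun τ hτ => hτ y)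
  have hI : Tendsto (fun τ => ∫ y, ρ y * ((w (x - y) τ - w (x - y) t) / (τ - t))) (𝓝[>] t)
      (𝓝 (∫ y, ρ y * w' (x - y) t)) := by
    apply tendsto_integral_filter_of_dominated_convergence (fun y => K * ρ y)
    · filter_upwards [hev] with τ hτ using (hmτ τ hτ).aestronglyMeasurable
    · filter_upwards [hbd] with τ hτ using ae_of_all _ hτ
    · exact hρ.integrable.const_mul K
    · exact ae_of_all _ hlim
  obtain ⟨N, hN0, hN⟩ := h.hd2 t ht (closedBall x ε) (isCompact_closedBall _ _) hΩ
  obtain ⟨hLe, hLi⟩ := mol_Lam (A := max N (4 * M)) h.hI hρ (h.hmeas t ht) (fun x => h.hM x t ht)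
    (x := x) (fun y hy z => d2_le_q1 (fun x => h.hM x t ht) (hN _ (hpt y hy) z))
  have hge : HH p κ C w ρ x t ≤ ∫ y, ρ y * w' (x - y) t := by
    have i2 := mol_int hρ (h.hmeas t ht).abs (M := M)
      (fun x => by rw [abs_abs]; exact h.hM x t ht) x
    unfold HH
    rw [hLe, mol, ← integral_const_mul, ← integral_const_mul,
      ← integral_sub (hLi.const_mul _) (i2.const_mul _)]
    apply integral_mono ((hLi.const_mul _).sub (i2.const_mul _)) hintg'
    intro y
    simp only [Pi.sub_apply]
    by_cases hy : ρ y = 0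
    · simp [hy]
    · have h1 := (abs_le.1 (h.heq (x - y) (hΩ (hpt y hy)) t ht)).1
      have h2 := hρ.nonneg y
      have h3 := mul_le_mul_of_nonneg_left h1 h2
      linarith
  intro r hr
  filter_upwards [hI.eventually (lt_mem_nhds (lt_of_lt_of_le hr hge)), hev] with τ h1 hτ
  have e : ∫ y, ρ y * ((w (x - y) τ - w (x - y) t) / (τ - t)) =
      (mol ρ (fun y => w y τ) x - mol ρ (fun y => w y t) x) / (τ - t) := by
    unfold mol
    rw [← integral_sub (mol_int hρ (h.hmeas τ (ht.trans hτ)) (fun x => h.hM x τ (ht.trans hτ)) x)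
      (mol_int hρ (h.hmeas t ht) (fun x => h.hM x t ht) x), ← integral_div]
    congr 1; ext y; ring
  rw [e, lt_div_iff₀ (sub_pos.2 hτ)] at h1
  linarith

lemma ahl_time (h : TR Ω p κ C M w w') {x0 : Eucl n} {R : ℝ} 
    (hΩ : closedBall x0 R ⊆ Ω) : ∀ t > 0, Fin1 p κ C w x0 R t := by
  let Fine : Set ℝ := {t | Fin1 p κ C w x0 R t ∧ Fin1 p κ C (fun x t => - w x t) x0 R t}
  suffices hB : Ioi 0 ∩ (interior Fine)ᶜ = ∅ by
    intro t ht
    by_contra hc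
    have : t ∈ Ioi 0 ∩ (interior Fine)ᶜ := ⟨ht, fun h => hc (interior_subset h).1⟩
    rw [hB] at this; exact this
  by_contra hne
  replace hne := nonempty_iff_ne_empty.2 hne
  set B : Set ℝ := Ioi 0 ∩ (interior Fine)ᶜ with hBdef
  have hlc : IsLocallyClosed B :=
    isOpen_Ioi.isLocallyClosed.inter isOpen_interior.isClosed_compl.isLocallyClosed
  have : LocallyCompactSpace B := hlc.locallyCompactSpace
  have : Nonempty B := hne.to_subtype
  let F : ℕ → Set ℝ := fun N => {t | ∀ x ∈ ball x0 R, ∀ z,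
    |d2 (fun y => w y t) x z| ≤ N * ‖z‖ ^ 2}
  have hclosed : ∀ N, IsClosed {t : B | (t : ℝ) ∈ F N} := by
    intro N
    have : {t : B | (t : ℝ) ∈ F N} = ⋂ x ∈ ball x0 R, ⋂ z,
        {t : B | |d2 (fun y => w y (t : ℝ)) x z| ≤ N * ‖z‖ ^ 2} := by
      ext t; simp [F]
    rw [this]
    refine isClosed_biInter fun x _ => isClosed_iInter fun z => ?_
    apply isClosed_le _ continuous_const
    have hcy : ∀ y, Continuous (fun t : B => w y (t : ℝ)) := fun y =>
      (h.hc y).comp_continuous continuous_subtype_val (fun t => t.2.1)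
    unfold d2
    exact (((continuous_const.mul (hcy _)).sub (hcy _)).sub (hcy _)).abs
  have hcover : ⋃ N, {t : B | (t : ℝ) ∈ F N} = univ := by
    ext t
    simp only [mem_iUnion, mem_univ, iff_true]
    obtain ⟨N, _, hN⟩ := h.hd2 t t.2.1 (closedBall x0 R) (isCompact_closedBall _ _) hΩ
    obtain ⟨k, hk⟩ := exists_nat_ge N
    refine ⟨k, fun x hx z => (hN x (ball_subset_closedBall hx) z).trans ?_⟩
    gcongr
  obtain ⟨N, ⟨t0, ht0⟩⟩ := nonempty_interior_of_iUnion_of_closed hclosed hcover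
  obtain ⟨U, hU, hUeq⟩ := isOpen_induced_iff.1 (isOpen_interior (s := {t : B | (t : ℝ) ∈ F N}))
  have ht0U : (t0 : ℝ) ∈ U ∩ Ioi 0 := ⟨by
    have : t0 ∈ (Subtype.val ⁻¹' U : Set B) := by rw [hUeq]; exact ht0
    exact this, t0.2.1⟩
  obtain ⟨r, hr, hrU⟩ := Metric.isOpen_iff.1 (hU.inter isOpen_Ioi) _ ht0U
  rw [Real.ball_eq_Ioo] at hrU
  set α := (t0 : ℝ) - r
  set β := (t0 : ℝ) + r
  have ht0I : (t0 : ℝ) ∈ Ioo α β := ⟨by simp [α, hr], by simp [β, hr]⟩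
  have hpos : ∀ t ∈ Ioo α β, 0 < t := fun t ht => (hrU ht).2
  have hBF : ∀ t ∈ B ∩ Ioo α β, t ∈ F N := by
    intro t ht
    have h1 : (⟨t, ht.1⟩ : B) ∈ (Subtype.val ⁻¹' U : Set B) := (hrU ht.2).1
    rw [hUeq] at h1
    have h2 : (⟨t, ht.1⟩ : B) ∈ {t : B | (t : ℝ) ∈ F N} := interior_subset h1
    exact h2
  have hnB : ∀ t ∈ Ioo α β, t ∉ B → t ∈ Fine := by
    intro t ht hB
    by_contra hc
    exact hB ⟨hpos t ht, fun h => hc (interior_subset h)⟩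
  have hBcl : ∀ a b, α < a → b < β → IsClosed (B ∩ Icc a b) := by
    intro a b ha hb
    have : B ∩ Icc a b = (interior Fine)ᶜ ∩ Icc a b := by
      ext t; constructor
      · rintro ⟨h1, h2⟩; exact ⟨h1.2, h2⟩
      · rintro ⟨h1, h2⟩
        exact ⟨⟨hpos t ⟨lt_of_lt_of_le ha h2.1, lt_of_le_of_lt h2.2 hb⟩, h1⟩, h2⟩
    rw [this]
    exact isOpen_interior.isClosed_compl.inter isClosed_Icc
  -- the one-sided Lipschitz estimate
  have hlip : ∀ R', 0 < R' → R' < R → ∃ K, ∀ v v' : Eucl n → ℝ → ℝ, TR Ω p κ C M v v' →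
      (∀ t ∈ Ioo α β, t ∉ B → Fin1 p κ C v x0 R t) →
      (∀ t ∈ B ∩ Ioo α β, ∀ x ∈ ball x0 R, ∀ z,
        |d2 (fun y => v y t) x z| ≤ N * ‖z‖ ^ 2) →
      ∀ x ∈ closedBall x0 R', ∀ t ∈ B ∩ Ioo α β, ∀ τ ∈ Ioo α β, t ≤ τ →
        v x τ - v x t ≥ -K * (τ - t) := by
    intro R' hR'0 hR'
    obtain ⟨C', hC', hgap⟩ := ahl_gap (Ω := Ω) (p := p) x0 h.hκ h.hC h.hM0 hR'0 hR'
      (Nat.cast_nonneg N)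
    refine ⟨C' + 1, fun v v' hv hf hd x hx => ?_⟩
    have hsub' : closedBall x0 R' ⊆ Ω := (closedBall_subset_closedBall hR'.le).trans hΩ
    have hxb : x ∈ ball x0 R := by
      simp only [mem_closedBall, mem_ball] at hx ⊢; linarith
    refine ahl_gaps (C := C') hBcl ((hv.hc x).mono hpos) ?_ ?_
    · intro a ha
      have ha0 := hpos a ha.2
      refine ⟨v' x a, hv.hder x (hsub' hx) a ha0, ?_⟩
      have h1 := (abs_le.1 (hv.heq x (hsub' hx) a ha0)).1
      have h2 := Lam_abs_le hv.hI (fun z => d2_le_q1 (fun x => hv.hM x a ha0) (hd a ha x hxb z))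
      have h3 := (abs_le.1 h2).2
      have h4 : κ * Lam p (fun y => v y a) x ≤ κ * (max (N : ℝ) (4 * M) * IK n p) :=
        mul_le_mul_of_nonneg_left h3 hv.hκ
      have h5 : C * |v x a| ≤ C * M := mul_le_mul_of_nonneg_left (hv.hM x a ha0) hv.hC
      linarith
    · intro a ha b hb hab hno
      rcases hab.eq_or_lt with rfl | hab
      · simp
      have hg := hgap v v' hv hsub' a b (hpos a ha.2) (hd a ha)
        (fun t ht => hf t ⟨ha.2.1.trans ht.1, ht.2.trans hb.2⟩ (hno t ht)) x hx
      have hcb : ContinuousAt (v x) b := (hv.hc x).continuousAt (Ioi_mem_nhds (hpos b hb))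
      have hl1 : Tendsto (fun T => v x T - v x a) (𝓝[<] b) (𝓝 (v x b - v x a)) :=
        (hcb.tendsto.mono_left nhdsWithin_le_nhds).sub_const _
      have hl2 : Tendsto (fun T => -C' * (T - a)) (𝓝[<] b) (𝓝 (-C' * (b - a))) := by
        have : Continuous (fun T => -C' * (T - a)) := by fun_prop
        exact (this.tendsto b).mono_left nhdsWithin_le_nhds
      apply le_of_tendsto_of_tendsto hl2 hl1
      filter_upwards [Ioo_mem_nhdsLT hab] with T hT using hg T hT
  have hall : Ioo α β ⊆ Fine := by
    intro t ht
    by_cases htB : t ∈ B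
    swap
    · exact hnB t ht htB
    have main : ∀ (x : Eucl n) (ρ : Eucl n → ℝ) (ε : ℝ), IsMol ρ ε → dist x x0 + ε < R → closedBall x ε ⊆ Ω ∧
        ∃ K, ∀ᶠ τ in 𝓝[>] t, ∀ y ∈ closedBall x ε, |w y τ - w y t| ≤ K * (τ - t) := by
      intro x ρ ε hρ hx
      have hsub : closedBall x ε ⊆ closedBall x0 (dist x x0 + ε) := by
        apply closedBall_subset_closedBall'; linarith
      refine ⟨hsub.trans ((closedBall_subset_closedBall hx.le).trans hΩ), ?_⟩
      have hR0 : 0 < dist x x0 + ε := add_pos_of_nonneg_of_pos dist_nonneg hρ.pos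
      obtain ⟨K, hK⟩ := hlip _ hR0 hx
      have k1 := hK w w' h (fun t ht hB => (hnB t ht hB).1) (fun t ht => hBF t ht)
      have k2 := hK _ _ h.neg (fun t ht hB => (hnB t ht hB).2)
        (fun t ht x hx z => by rw [d2_fneg, abs_neg]; exact hBF t ht x hx z)
      refine ⟨K, ?_⟩
      filter_upwards [Ioo_mem_nhdsGT ht.2] with τ hτ y hy
      have hτ' : τ ∈ Ioo α β := ⟨ht.1.trans hτ.1, hτ.2⟩
      have l1 := k1 y (hsub hy) t ⟨htB, ht⟩ τ hτ' hτ.1.le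
      have l2 := k2 y (hsub hy) t ⟨htB, ht⟩ τ hτ' hτ.1.le
      rw [abs_le]; constructor <;> linarith
    constructor
    · intro x ρ ε hρ hx
      obtain ⟨hs, K, hK⟩ := main x ρ ε hρ hx
      exact fin1_of_lip h hρ hs (hpos t ht) hK
    · intro x ρ ε hρ hx
      obtain ⟨hs, K, hK⟩ := main x ρ ε hρ hx
      refine fin1_of_lip h.neg hρ hs (K := K) (hpos t ht) ?_
      filter_upwards [hK] with τ hτ y hy
      have := hτ y hy
      rw [← abs_neg] at this
      convert this using 2; ring
  exact t0.2.2 (mem_interior.2 ⟨_, hall, isOpen_Ioo, ht0I⟩)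

end TR


section refl
variable {n : ℕ} [NeZero n] {lam : ℝ}

lemma reflect_zero (x : Eucl n) : reflect lam x 0 = 2 * lam - x 0 := by
  simp [reflect]; ring

lemma reflect_invol (x : Eucl n) : reflect lam (reflect lam x) = x := by
  unfold reflect
  ext i
  by_cases hi : i = 0
  · subst hi; simp; ring
  · simp [hi]

lemma reflect_of_mem {x : Eucl n} (hx : x 0 = lam) : reflect lam x = x := by
  simp [reflect, hx]

lemma reflect_norm_sq (x y : Eucl n) :
    ‖x - reflect lam y‖ ^ 2 = ‖x - y‖ ^ 2 + 4 * (x 0 - lam) * (y 0 - lam) := by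
  have : x - reflect lam y = (x - y) - (2 * (lam - y 0)) • EuclideanSpace.single (0 : Fin n) (1 : ℝ) := by
    unfold reflect; abel
  rw [this, norm_sub_sq_real, norm_smul, inner_smul_right]
  have h1 : inner ℝ (x - y) (EuclideanSpace.single (0 : Fin n) (1 : ℝ)) = x 0 - y 0 := by
    simp [EuclideanSpace.inner_single_right]
  rw [h1, mul_pow, Real.norm_eq_abs, sq_abs]
  simp
  ring

lemma reflect_dist (x y : Eucl n) : ‖reflect lam x - reflect lam y‖ = ‖x - y‖ := by
  have h1 := reflect_norm_sq (lam := lam) (reflect lam x) y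
  have h2 := reflect_norm_sq (lam := lam) y x
  rw [reflect_zero] at h1
  rw [norm_sub_rev (reflect lam x) y, h2, norm_sub_rev y x] at h1
  have : ‖reflect lam x - reflect lam y‖ ^ 2 = ‖x - y‖ ^ 2 := by rw [h1]; ring
  exact (sq_eq_sq₀ (norm_nonneg _) (norm_nonneg _)).1 this

lemma reflect_dist' (x y : Eucl n) : ‖reflect lam x - y‖ = ‖x - reflect lam y‖ := by
  rw [← reflect_dist (lam := lam) x, reflect_invol]

/-- linear part of the reflection, as a linear isometry equivalence -/
def reflLin (n : ℕ) [NeZero n] : Eucl n ≃ₗᵢ[ℝ] Eucl n where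
  toFun := reflect 0
  invFun := reflect 0
  left_inv := reflect_invol
  right_inv := reflect_invol
  map_add' x y := by
    unfold reflect
    ext i
    by_cases hi : i = 0
    · subst hi; simp; ring
    · simp [hi]
  map_smul' c x := by
    unfold reflect
    ext i
    by_cases hi : i = 0
    · subst hi; simp; ring
    · simp [hi]
  norm_map' x := by
    have := reflect_dist (lam := 0) x 0
    have h0 : reflect 0 (0 : Eucl n) = 0 := by simp [reflect]
    rw [h0] at this
    simpa using this

lemma reflect_eq (x : Eucl n) : reflect lam x =
    reflect 0 x + (2 * lam) • EuclideanSpace.single (0 : Fin n) (1 : ℝ) := by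
  unfold reflect
  ext i
  by_cases hi : i = 0
  · subst hi; simp; ring
  · simp [hi]

lemma reflect0_mp : MeasurePreserving (reflect 0 : Eucl n → Eucl n) := (reflLin n).measurePreserving

lemma reflect_mp : MeasurePreserving (reflect lam : Eucl n → Eucl n) := by
  have h := (measurePreserving_add_right (volume : Measure (Eucl n))
    ((2 * lam) • EuclideanSpace.single (0 : Fin n) (1 : ℝ))).comp reflect0_mp
  have e : (reflect lam : Eucl n → Eucl n) =
    (fun x => x + (2 * lam) • EuclideanSpace.single (0 : Fin n) (1 : ℝ)) ∘ reflect 0 := by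
    ext1 x; exact reflect_eq x
  rw [e]; exact h

/-- the reflection as a measurable equivalence -/
def reflEquiv (n : ℕ) [NeZero n] (lam : ℝ) : Eucl n ≃ᵐ Eucl n where
  toFun := reflect lam
  invFun := reflect lam
  left_inv := reflect_invol
  right_inv := reflect_invol
  measurable_toFun := reflect_mp.measurable
  measurable_invFun := reflect_mp.measurable

lemma integral_reflect (F : Eucl n → ℝ) : ∫ y, F (reflect lam y) = ∫ y, F y :=
  (reflect_mp (lam := lam)).integral_comp (reflEquiv n lam).measurableEmbedding F

lemma integrable_reflect {F : Eucl n → ℝ} (h : Integrable F) :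
    Integrable (fun y => F (reflect lam y)) :=
  (reflect_mp (lam := lam)).integrable_comp_of_integrable h

lemma symm_int_mono {F G : Eucl n → ℝ} (hF : Integrable F) (hG : Integrable G)
    (h1 : ∀ y : Eucl n, lam ≤ y 0 → G y + G (reflect lam y) ≤ F y + F (reflect lam y)) :
    ∫ y, G y ≤ ∫ y, F y := by
  have hall : ∀ y : Eucl n, G y + G (reflect lam y) ≤ F y + F (reflect lam y) := by
    intro y
    rcases le_or_gt lam (y 0) with h | h
    · exact h1 y h
    · have := h1 (reflect lam y) (by rw [reflect_zero]; linarith)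
      rw [reflect_invol] at this
      linarith
  have := integral_mono (hG.add (integrable_reflect (lam := lam) hG))
    (hF.add (integrable_reflect (lam := lam) hF)) hall
  simp only [Pi.add_apply] at this
  rw [integral_add hG (integrable_reflect hG), integral_add hF (integrable_reflect hF),
    integral_reflect, integral_reflect] at this
  linarith

lemma meas_coord : Measurable (fun x : Eucl n => x 0) := by fun_prop

lemma measSig : MeasurableSet {x : Eucl n | lam < x 0} := measurableSet_lt measurable_const meas_coord

/-- negative part on the half-space -/
def NegP (lam : ℝ) (w : Eucl n → ℝ → ℝ) (t : ℝ) (y : Eucl n) : ℝ :=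
  {x : Eucl n | lam < x 0}.indicator (fun y => max 0 (- w y t)) y

lemma NegP_nonneg (w : Eucl n → ℝ → ℝ) (t : ℝ) (y : Eucl n) : 0 ≤ NegP lam w t y := by
  unfold NegP; apply indicator_nonneg; intro y _; exact le_max_left _ _

lemma NegP_meas {w : Eucl n → ℝ → ℝ} {t : ℝ} (hw : Measurable (fun x => w x t)) :
    Measurable (NegP lam w t) :=
  (measurable_const.max hw.neg).indicator measSig

lemma NegP_le {w : Eucl n → ℝ → ℝ} {t M : ℝ} (hM : ∀ x, |w x t| ≤ M) (y : Eucl n) :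
    |NegP lam w t y| ≤ M := by
  rw [abs_of_nonneg (NegP_nonneg _ _ _)]
  have h := hM y
  unfold NegP indicator
  split_ifs
  · apply max_le ((abs_nonneg _).trans h)
    linarith [(abs_le.1 h).1]
  · exact (abs_nonneg _).trans h

lemma mol_antisymm {ρ v : Eucl n → ℝ} {ε : ℝ} (hρ : IsMol ρ ε)
    (hv : ∀ x, v (reflect lam x) = - v x) (x : Eucl n) :
    mol ρ v (reflect lam x) = - mol ρ v x := by
  rw [mol_eq, mol_eq, ← integral_reflect (lam := lam), ← integral_neg]
  congr 1; ext y
  rw [hv, mul_neg]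
  congr 2
  exact le_antisymm (hρ.anti _ _ (by rw [reflect_dist])) (hρ.anti _ _ (by rw [reflect_dist]))

lemma mol_ge_neg {ρ : Eucl n → ℝ} {ε : ℝ} (hρ : IsMol ρ ε) {w : Eucl n → ℝ → ℝ} {t M : ℝ}
    (hw : Measurable (fun x => w x t)) (hM : ∀ x, |w x t| ≤ M)
    (hanti : ∀ x, w (reflect lam x) t = - w x t) {x : Eucl n} (hx : lam ≤ x 0) :
    - mol ρ (NegP lam w t) x ≤ mol ρ (fun y => w y t) x := by
  rw [mol_eq, mol_eq, ← integral_neg]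
  apply symm_int_mono (lam := lam) (mol_int' hρ hw hM x)
    (mol_int' hρ (NegP_meas hw) (NegP_le hM) x).neg
  intro y hy
  have h2 := reflect_norm_sq (lam := lam) x y
  have h3 : ‖x - y‖ ≤ ‖x - reflect lam y‖ := by
    rw [← sq_le_sq₀ (norm_nonneg _) (norm_nonneg _), h2]
    have : 0 ≤ (x 0 - lam) * (y 0 - lam) := mul_nonneg (by linarith) (by linarith)
    linarith
  have h4 := hρ.anti _ _ h3
  have h5 := hρ.nonneg (x - reflect lam y)
  have h6 : NegP lam w t (reflect lam y) = 0 := by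
    unfold NegP; apply indicator_of_notMem
    simp only [mem_ofPred_eq, reflect_zero]; linarith
  simp only [Pi.neg_apply]
  rw [h6, hanti]
  rcases hy.eq_or_lt with h | h
  · have := hanti y
    rw [reflect_of_mem h.symm] at this
    have e : w y t = 0 := by linarith
    have := mul_nonneg (h5.trans h4) (NegP_nonneg (lam := lam) w t y)
    rw [e]; linarith
  · have e : NegP lam w t y = max 0 (- w y t) := by
      unfold NegP; rw [indicator_of_mem]; exact h
    rw [e]
    rcases le_total 0 (w y t) with h7 | h7
    · rw [max_eq_left (by linarith)]
      nlinarith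
    · rw [max_eq_right (by linarith)]
      nlinarith

end refl


section touch
variable {n : ℕ} [NeZero n] {lam : ℝ} {p : ℝ}

lemma fker_anti (hp : 0 ≤ p) {y z : Eucl n} (hy : y ≠ 0) (h : ‖y‖ ≤ ‖z‖) : fker p z ≤ fker p y := by
  unfold fker
  have : 0 < ‖y‖ := norm_pos_iff.2 hy
  apply one_div_le_one_div_of_le (by positivity)
  exact Real.rpow_le_rpow (norm_nonneg _) h hp

/-- the kernel is integrable outside balls -/
lemma fker_out_int (hI : Integrable (fun z : Eucl n => q1 z * fker p z)) (x0 : Eucl n) {r : ℝ}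
    (hr : 0 < r) : Integrable ((ball x0 r)ᶜ.indicator (fun y => fker p (y - x0))) := by
  have h1 := (hI.comp_sub_right x0).const_mul (1 / min 1 (r ^ 2))
  refine h1.mono' ?_ (ae_of_all _ fun y => ?_)
  · apply Measurable.aestronglyMeasurable
    exact ((fker_meas p).comp (by fun_prop)).indicator measurableSet_ball.compl
  · have hm : 0 < min 1 (r ^ 2) := by positivity
    have hk := fker_nonneg p (y - x0)
    have hq := q1_nonneg (y - x0)
    by_cases hy : y ∈ ball x0 r
    · rw [indicator_of_notMem (by simpa using hy)]
      simp only [norm_zero]; positivity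
    · rw [indicator_of_mem (by simpa using hy), Real.norm_eq_abs, abs_of_nonneg hk, ← mul_assoc]
      apply le_mul_of_one_le_left hk
      rw [div_mul_eq_mul_div, one_mul, one_le_div hm]
      unfold q1
      apply min_le_min le_rfl
      simp only [mem_ball, not_lt, dist_eq_norm] at hy
      gcongr

lemma touch_lemma (hI : Integrable (fun z : Eucl n => q1 z * fker p z)) (hp : 0 ≤ p)
    {v e g : Eucl n → ℝ} {x0 x : Eucl n} {r0 A M' : ℝ}
    (hr0 : 0 < r0)
    (hv : Measurable v) (hM' : ∀ y, |v y| ≤ M')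
    (hanti : ∀ y, v (reflect lam y) = - v y)
    (hA : ∀ z, |d2 v x z| ≤ A * q1 z)
    (hx : lam < x 0) (hxr : dist x x0 ≤ r0) (hvx : v x ≤ 0)
    (hmin : ∀ y : Eucl n, lam < y 0 → y ∈ ball x0 (2 * r0) → v x ≤ v y)
    (he : Measurable e) {Me : ℝ} (heM : ∀ y, |e y| ≤ Me) (he0 : ∀ y, 0 ≤ e y)
    (hve : ∀ y : Eucl n, lam < y 0 → y ∉ ball x0 (2 * r0) → - e y ≤ v y)
    (hg : Integrable g) (hg0 : ∀ y, 0 ≤ g y)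
    (hgb : ∀ y ∈ ball x0 (2 * r0), g y = 0)
    (hgS : ∀ y : Eucl n, y 0 ≤ lam → g y = 0)
    (hgJ : ∀ y : Eucl n, lam < y 0 → y ∉ ball x0 (2 * r0) →
      g y ≤ fker p (x - y) - fker p (x - reflect lam y)) :
    (∫ y, g y * v y) - 2 ^ p * ∫ y, e y * (ball x0 (2 * r0))ᶜ.indicator (fun y => fker p (y - x0)) y
      ≤ - (1 / 2) * Lam p v x := by
  have hM0 : 0 ≤ M' := (abs_nonneg _).trans (hM' 0)
  obtain ⟨r, hr, hrb⟩ : ∃ r > 0, ball x r ⊆ {y : Eucl n | lam < y 0} ∩ ball x0 (2 * r0) := by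
    apply Metric.isOpen_iff.1
    · exact (isOpen_lt continuous_const (by fun_prop)).inter isOpen_ball
    · exact ⟨hx, by rw [mem_ball]; linarith⟩
  have hm : 0 < min 1 (r ^ 2) := by positivity
  have hA0 : 0 ≤ A := by
    obtain ⟨z, hz⟩ := exists_ne (0 : Eucl n)
    have h1 := (abs_nonneg _).trans (hA z)
    have h2 : 0 < q1 z := lt_min one_pos (by have := norm_pos_iff.2 hz; positivity)
    by_contra! hc
    nlinarith
  have hdiff : ∀ z, |v (x + z) - v x| ≤ (A + 2 * M' / min 1 (r ^ 2)) * q1 z := by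
    intro z
    have hq := q1_nonneg z
    rcases lt_or_ge ‖z‖ r with hz | hz
    · have h1 := hrb (show x + z ∈ ball x r by simpa [dist_eq_norm] using hz)
      have h2 := hrb (show x - z ∈ ball x r by simpa [dist_eq_norm] using hz)
      have h3 := hmin _ h1.1 h1.2
      have h4 := hmin _ h2.1 h2.2
      have h5 := (abs_le.1 (hA z)).1
      rw [abs_of_nonneg (by linarith)]
      have h6 : 0 ≤ 2 * M' / min 1 (r ^ 2) * q1 z := by positivity
      unfold d2 at h5
      linarith
    · have h1 := abs_le.1 (hM' (x + z))
      have h2 := abs_le.1 (hM' x)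
      have h3 : |v (x + z) - v x| ≤ 2 * M' := by
        rw [abs_le]; constructor <;> linarith [h1.1, h1.2, h2.1, h2.2]
      refine h3.trans ?_
      have h4 : min 1 (r ^ 2) ≤ q1 z := by unfold q1; gcongr
      have h5 : 2 * M' ≤ 2 * M' / min 1 (r ^ 2) * q1 z := by
        rw [div_mul_eq_mul_div, le_div_iff₀ hm]; gcongr
      have : 0 ≤ A * q1 z := by positivity
      linarith
  have hF0 : Integrable (fun z => (v (x + z) - v x) * fker p z) := by
    refine (hI.const_mul (A + 2 * M' / min 1 (r ^ 2))).mono' ?_ (ae_of_all _ fun z => ?_)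
    · apply Measurable.aestronglyMeasurable
      exact ((hv.comp (by fun_prop)).sub_const _).mul (fker_meas p)
    · rw [Real.norm_eq_abs, abs_mul, abs_of_nonneg (fker_nonneg p z), ← mul_assoc]
      exact mul_le_mul_of_nonneg_right (hdiff z) (fker_nonneg p z)
  have hLam : - (1 / 2) * Lam p v x = ∫ z, (v (x + z) - v x) * fker p z := by
    have h1 : ∫ z, (v (x - z) - v x) * fker p z = ∫ z, (v (x + z) - v x) * fker p z := by
      rw [← integral_neg_eq_self]
      congr 1; ext z; rw [fker_neg]; simp
    have h2 : Integrable (fun z => (v (x - z) - v x) * fker p z) := by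
      refine (hF0.comp_neg).congr (ae_of_all _ fun z => ?_)
      simp only [fker_neg, ← sub_eq_add_neg]
    have h3 : Lam p v x = -((∫ z, (v (x + z) - v x) * fker p z) +
        ∫ z, (v (x - z) - v x) * fker p z) := by
      rw [← integral_add hF0 h2, ← integral_neg]
      unfold Lam d2; congr 1; ext z; ring
    rw [h3, h1]; ring
  have hFe : ∫ z, (v (x + z) - v x) * fker p z = ∫ y, (v y - v x) * fker p (x - y) := by
    rw [← integral_sub_right_eq_self _ x]
    congr 1; ext y
    rw [← fker_neg]; simp
  have hF : Integrable (fun y => (v y - v x) * fker p (x - y)) := by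
    refine (hF0.comp_sub_right x).congr (ae_of_all _ fun y => ?_)
    simp only
    rw [← fker_neg]; simp
  rw [hLam, hFe]
  have hgv : Integrable (fun y => g y * v y) := by
    refine (hg.mul_const M').mono' (hg.aestronglyMeasurable.mul hv.aestronglyMeasurable)
      (ae_of_all _ fun y => ?_)
    rw [Real.norm_eq_abs, abs_mul, abs_of_nonneg (hg0 y)]
    exact mul_le_mul_of_nonneg_left (hM' y) (hg0 y)
  set k0 : Eucl n → ℝ := (ball x0 (2 * r0))ᶜ.indicator (fun y => fker p (y - x0)) with hk0
  have hk0i : Integrable k0 := fker_out_int hI x0 (by positivity)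
  have hk00 : ∀ y, 0 ≤ k0 y := fun y => indicator_nonneg (fun y _ => fker_nonneg p _) y
  have hek : Integrable (fun y => e y * k0 y) := by
    refine (hk0i.const_mul Me).mono' (he.aestronglyMeasurable.mul hk0i.aestronglyMeasurable)
      (ae_of_all _ fun y => ?_)
    rw [Real.norm_eq_abs, abs_mul, abs_of_nonneg (hk00 y)]
    exact mul_le_mul_of_nonneg_right (heM y) (hk00 y)
  rw [← integral_const_mul, ← integral_sub hgv (hek.const_mul _)]
  have h2p : (0 : ℝ) < 2 ^ p := by positivity
  apply symm_int_mono (lam := lam) hF (hgv.sub (hek.const_mul _))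
  intro y hy
  simp only [Pi.sub_apply]
  have hy' : reflect lam y 0 ≤ lam := by rw [reflect_zero]; linarith
  rw [hgS _ hy', hanti]
  have n0 : 0 ≤ 2 ^ p * (e (reflect lam y) * k0 (reflect lam y)) :=
    mul_nonneg h2p.le (mul_nonneg (he0 _) (hk00 _))
  have n1 : 0 ≤ 2 ^ p * (e y * k0 y) :=
    mul_nonneg h2p.le (mul_nonneg (he0 _) (hk00 _))
  have n2 := fker_nonneg p (x - y)
  have n3 := fker_nonneg p (x - reflect lam y)
  rcases hy.eq_or_lt with hyl | hyl
  · have h0 := hanti y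
    rw [reflect_of_mem hyl.symm] at h0
    have h1 : v y = 0 := by linarith
    rw [hgS y hyl.ge, h1]
    have : 0 ≤ - v x * fker p (x - y) := mul_nonneg (by linarith) n2
    have : 0 ≤ - v x * fker p (x - reflect lam y) := mul_nonneg (by linarith) n3
    linarith
  · by_cases hyb : y ∈ ball x0 (2 * r0)
    · rw [hgb y hyb]
      have h1 := hmin y hyl hyb
      have h2 := reflect_norm_sq (lam := lam) x y
      by_cases hxy : x = y
      · subst hxy
        have : 0 ≤ - v x * fker p (x - reflect lam x) := mul_nonneg (by linarith) n3
        have := mul_nonneg (show 0 ≤ -v x - v x by linarith) n3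
        linarith
      · have h3 : ‖x - y‖ ≤ ‖x - reflect lam y‖ := by
          rw [← sq_le_sq₀ (norm_nonneg _) (norm_nonneg _), h2]
          have : 0 ≤ (x 0 - lam) * (y 0 - lam) := mul_nonneg (by linarith) (by linarith)
          linarith
        have h4 := fker_anti hp (sub_ne_zero.2 hxy) h3
        have h5 : 0 ≤ (v y - v x) * (fker p (x - y) - fker p (x - reflect lam y)) :=
          mul_nonneg (by linarith) (by linarith)
        have h6 : 0 ≤ - v x * fker p (x - reflect lam y) := mul_nonneg (by linarith) n3
        nlinarith
    · have hJ := hgJ y hyl hyb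
      have h1 := hve y hyl hyb
      have hk1 : k0 y = fker p (y - x0) := indicator_of_mem (by simpa using hyb) _
      have hyd : 2 * r0 ≤ ‖y - x0‖ := by simpa [dist_eq_norm] using hyb
      have hle : fker p (x - y) ≤ 2 ^ p * k0 y := by
        rw [hk1]
        have h2 : ‖y - x0‖ ≤ 2 * ‖x - y‖ := by
          have h3 : ‖y - x0‖ ≤ ‖y - x‖ + ‖x - x0‖ := by
            have := norm_add_le (y - x) (x - x0); simpa using this
          rw [norm_sub_rev y x] at h3
          rw [dist_eq_norm] at hxr
          linarith
        have h3 : 0 < ‖x - y‖ := by linarith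
        unfold fker
        rw [mul_one_div, div_le_div_iff₀ (by positivity) (Real.rpow_pos_of_pos (by linarith) _),
          one_mul, ← Real.mul_rpow (by norm_num) h3.le]
        exact Real.rpow_le_rpow (norm_nonneg _) h2 hp
      have h6 : 0 ≤ - v x * fker p (x - y) := mul_nonneg (by linarith) n2
      have h7 : 0 ≤ - v x * fker p (x - reflect lam y) := mul_nonneg (by linarith) n3
      have hg0y := hg0 y
      have hey := he0 y
      have hkey : g y * v y - 2 ^ p * (e y * k0 y) ≤
          v y * (fker p (x - y) - fker p (x - reflect lam y)) := by
        rcases le_total 0 (v y) with hv0 | hv0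
        · have := mul_le_mul_of_nonneg_left hJ hv0
          linarith
        · have a1 : g y * v y ≤ 0 := mul_nonpos_of_nonneg_of_nonpos hg0y hv0
          have a2 : e y * fker p (x - y) ≤ e y * (2 ^ p * k0 y) := mul_le_mul_of_nonneg_left hle hey
          have a3 : 0 ≤ fker p (x - y) - fker p (x - reflect lam y) := by linarith
          have a4 := mul_le_mul_of_nonneg_right h1 a3
          have a5 : 0 ≤ e y * fker p (x - reflect lam y) := mul_nonneg hey n3
          linarith
      linarith

/-- lower bound for the antisymmetrised kernel -/
lemma J_lower (hp : 1 ≤ p) {x y : Eucl n} {D d : ℝ} (hx : lam < x 0) (hd : 0 < d)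
    (hy : lam + d ≤ y 0) (hxy : x ≠ y) (hD : ‖x - reflect lam y‖ ≤ D) :
    2 * d / (D ^ 2 * D ^ p) * (x 0 - lam) ≤ fker p (x - y) - fker p (x - reflect lam y) := by
  have h2 := reflect_norm_sq (lam := lam) x y
  have h1 : 0 < ‖x - y‖ := norm_pos_iff.2 (sub_ne_zero.2 hxy)
  have h3 : ‖x - y‖ ≤ ‖x - reflect lam y‖ := by
    rw [← sq_le_sq₀ (norm_nonneg _) (norm_nonneg _), h2]
    have : 0 ≤ (x 0 - lam) * (y 0 - lam) := mul_nonneg (by linarith) (by linarith)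
    linarith
  unfold fker
  set a := ‖x - y‖
  set b := ‖x - reflect lam y‖
  have hb : 0 < b := by linarith
  have hD0 : 0 < D := by linarith
  have hB : 1 + p * (b / a - 1) ≤ (b / a) ^ p := by
    have := one_add_mul_self_le_rpow_one_add (s := b / a - 1) (by
      have : 0 ≤ b / a := by positivity
      linarith) hp
    simpa using this
  have hba : 0 ≤ b / a - 1 := by rw [sub_nonneg, one_le_div h1]; exact h3
  have e1 : 1 / a ^ p - 1 / b ^ p = ((b / a) ^ p - 1) / b ^ p := by
    rw [Real.div_rpow hb.le h1.le]
    have := Real.rpow_pos_of_pos h1 p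
    have := Real.rpow_pos_of_pos hb p
    field_simp
  rw [e1]
  have e2 : b / a - 1 ≤ (b / a) ^ p - 1 := by nlinarith
  have e3 : 2 * d * (x 0 - lam) / D ^ 2 ≤ b / a - 1 := by
    rw [div_sub_one h1.ne', div_le_div_iff₀ (by positivity) h1]
    have f1 : (b - a) * (b + a) = 4 * (x 0 - lam) * (y 0 - lam) := by linarith
    have f2 : 4 * (x 0 - lam) * d ≤ (b - a) * (2 * D) := by
      have : 4 * (x 0 - lam) * d ≤ 4 * (x 0 - lam) * (y 0 - lam) := by
        apply mul_le_mul_of_nonneg_left <;> linarith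
      have : (b - a) * (b + a) ≤ (b - a) * (2 * D) := by
        apply mul_le_mul_of_nonneg_left <;> linarith
      linarith
    have f3 : 2 * d * (x 0 - lam) * a ≤ 2 * d * (x 0 - lam) * D := by
      apply mul_le_mul_of_nonneg_left (by linarith)
      have : 0 < x 0 - lam := by linarith
      positivity
    nlinarith
  have hbp := Real.rpow_pos_of_pos hb p
  have hDp := Real.rpow_pos_of_pos hD0 p
  have e4 : b ^ p ≤ D ^ p := Real.rpow_le_rpow hb.le hD (by linarith)
  calc 2 * d / (D ^ 2 * D ^ p) * (x 0 - lam) = (2 * d * (x 0 - lam) / D ^ 2) / D ^ p := by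
        field_simp
    _ ≤ ((b / a) ^ p - 1) / D ^ p := by gcongr; linarith
    _ ≤ _ := by
        apply div_le_div_of_nonneg_left _ hbp e4
        linarith

end touch


section barrier
variable {n : ℕ} [NeZero n] {lam : ℝ} {p : ℝ}

lemma barrier (hI : Integrable (fun z : Eucl n => q1 z * fker p z)) {x0 : Eucl n}
    (hx0 : x0 0 = lam) {r0 : ℝ} (hr0 : 0 < r0) :
    ∃ (P : Eucl n → ℝ) (A A2 : ℝ), Continuous P ∧ (∀ x z, |d2 P x z| ≤ A * q1 z) ∧ 0 ≤ A2 ∧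
      (∀ x, P (reflect lam x) = - P x) ∧ (∀ x : Eucl n, lam ≤ x 0 → 0 ≤ P x) ∧
      (∀ x : Eucl n, lam ≤ x 0 → P x ≤ x 0 - lam) ∧ (∀ x, r0 ≤ dist x x0 → P x = 0) ∧
      (∀ x, dist x x0 ≤ r0 / 2 → P x = x 0 - lam) ∧
      (∃ M, ∀ x, |P x| ≤ M) ∧
      ∀ x : Eucl n, lam ≤ x 0 → |Lam p P x| ≤ A2 * (x 0 - lam) := by
  let b : Eucl n → ℝ := fun x => Real.smoothTransition (2 - 2 * ‖x - x0‖ ^ 2 / r0 ^ 2)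
  let P : Eucl n → ℝ := fun x => (x 0 - lam) * b x
  have hb : ContDiff ℝ 3 b := by
    apply (Real.smoothTransition.contDiff (n := 3)).comp
    apply contDiff_const.sub
    apply ContDiff.div_const
    apply contDiff_const.mul
    exact (contDiff_norm_sq ℝ).comp (contDiff_id.sub contDiff_const)
  have hc0 : ContDiff ℝ 3 (fun x : Eucl n => x 0 - lam) := by
    apply ContDiff.sub _ contDiff_const
    exact (EuclideanSpace.proj (𝕜 := ℝ) (0 : Fin n)).contDiff
  have hP : ContDiff ℝ 3 P := hc0.mul hb
  have hb0 : ∀ x, r0 ≤ dist x x0 → b x = 0 := by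
    intro x hx
    apply Real.smoothTransition.zero_of_nonpos
    rw [dist_eq_norm] at hx
    have : 1 ≤ ‖x - x0‖ ^ 2 / r0 ^ 2 := by rw [one_le_div (by positivity)]; gcongr
    rw [mul_div_assoc]; linarith
  have hb1 : ∀ x, dist x x0 ≤ r0 / 2 → b x = 1 := by
    intro x hx
    apply Real.smoothTransition.one_of_one_le
    rw [dist_eq_norm] at hx
    have : ‖x - x0‖ ^ 2 / r0 ^ 2 ≤ 1 / 4 := by
      rw [div_le_iff₀ (by positivity)]
      have := norm_nonneg (x - x0)
      nlinarith
    rw [mul_div_assoc]; linarith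
  have hcs : HasCompactSupport P := by
    apply HasCompactSupport.of_support_subset_isCompact (isCompact_closedBall x0 r0)
    intro z hz
    by_contra hc
    apply hz
    simp only [mem_closedBall, not_le] at hc
    simp [P, hb0 z hc.le]
  have hbn : ∀ x, 0 ≤ b x := fun x => Real.smoothTransition.nonneg _
  have hbl : ∀ x, b x ≤ 1 := fun x => Real.smoothTransition.le_one _
  have hanti : ∀ x, P (reflect lam x) = - P x := by
    intro x
    have h1 : ‖reflect lam x - x0‖ = ‖x - x0‖ := by
      rw [reflect_dist', reflect_of_mem hx0]
    simp only [P, b, h1, reflect_zero]; ring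
  obtain ⟨A, hA0, hA⟩ := d2_le_of_contDiff (hP.of_le (by norm_num)) hcs
  set e : Eucl n := EuclideanSpace.single (0 : Fin n) (1 : ℝ) with he
  have hdP : ContDiff ℝ 2 (fun x => fderiv ℝ P x e) := by
    have : ContDiff ℝ 2 (fderiv ℝ P) := hP.fderiv_right (by norm_num)
    exact this.clm_apply contDiff_const
  have hdcs : HasCompactSupport (fun x => fderiv ℝ P x e) := hcs.fderiv_apply (𝕜 := ℝ) e
  obtain ⟨A1, hA10, hA1⟩ := d2_le_of_contDiff hdP hdcs
  clear_value b
  refine ⟨P, A, A1 * IK n p, hP.continuous, hA, mul_nonneg hA10 (IK_nonneg n p), hanti, ?_, ?_, ?_,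
    ?_, ?_, ?_⟩
  · intro x hx; exact mul_nonneg (by linarith) (hbn x)
  · intro x hx; exact mul_le_of_le_one_right (by linarith) (hbl x)
  · intro x hx; simp only [P, hb0 x hx, mul_zero]
  · intro x hx; simp only [P, hb1 x hx, mul_one]
  · obtain ⟨M, hM⟩ := hcs.exists_bound_of_continuous hP.continuous
    exact ⟨M, hM⟩
  · intro x hx
    set xT : Eucl n := x - (x 0 - lam) • e with hxT
    have hxT0 : xT 0 = lam := by simp [hxT, he]
    have hLT : Lam p P xT = 0 := by
      have h1 : ∀ z, d2 P xT (reflect 0 z) * fker p (reflect 0 z) = -(d2 P xT z * fker p z) := by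
        intro z
        have k1 : fker p (reflect 0 z) = fker p z := by
          have : ‖reflect 0 z‖ = ‖z‖ := (reflLin n).norm_map z
          unfold fker; rw [this]
        have k2 : xT + reflect 0 z = reflect lam (xT + z) := by
          unfold reflect; ext i
          by_cases hi : i = 0
          · subst hi; simp [hxT0]; ring
          · simp [hi]
        have k3 : xT - reflect 0 z = reflect lam (xT - z) := by
          unfold reflect; ext i
          by_cases hi : i = 0
          · subst hi; simp [hxT0]; ring
          · simp [hi]
        have k4 : P xT = 0 := by simp [P, hxT0]
        unfold d2
        rw [k1, k2, k3, hanti, hanti, k4]; ring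
      have h2 : Lam p P xT = - Lam p P xT := by
        conv_lhs => unfold Lam; rw [← integral_reflect (lam := 0)]
        simp only [h1, integral_neg, Lam]
      linarith
    have hd : ∀ z, |d2 P x z - d2 P xT z| ≤ A1 * (x 0 - lam) * q1 z := by
      intro z
      have hder : ∀ (y : Eucl n) (τ : ℝ), HasDerivAt (fun τ : ℝ => P (y + τ • e))
          (fderiv ℝ P (y + τ • e) e) τ := by
        intro y τ
        have h1 : HasFDerivAt P (fderiv ℝ P (y + τ • e)) (y + τ • e) :=
          (hP.differentiable (by norm_num) _).hasFDerivAt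
        have h2 : HasDerivAt (fun τ : ℝ => y + τ • e) e τ := by
          simpa using ((hasDerivAt_id τ).smul_const e).const_add y
        exact h1.comp_hasDerivAt τ h2
      let φ : ℝ → ℝ := fun τ => d2 P (xT + τ • e) z
      have hφ : ∀ τ, HasDerivAt φ (d2 (fun x => fderiv ℝ P x e) (xT + τ • e) z) τ := by
        intro τ
        have h1 := hder xT τ
        have h2 := hder (xT + z) τ
        have h3 := hder (xT - z) τ
        rw [add_right_comm] at h2
        rw [sub_add_eq_add_sub] at h3
        have := ((h1.const_mul 2).sub h2).sub h3
        refine this.congr_of_eventuallyEq (Eventually.of_forall fun τ => ?_)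
        simp only [φ, d2, Pi.sub_apply]
        rw [add_right_comm xT (τ • e) z, ← sub_add_eq_add_sub xT z (τ • e)]
      have := Convex.norm_image_sub_le_of_norm_hasDerivWithin_le (f := φ) (s := univ)
        (x := 0) (y := x 0 - lam) (C := A1 * q1 z) (fun τ _ => (hφ τ).hasDerivWithinAt)
        (fun τ _ => hA1 _ z) convex_univ (mem_univ _) (mem_univ _)
      have e1 : φ (x 0 - lam) = d2 P x z := by simp [φ, hxT]
      have e0 : φ 0 = d2 P xT z := by simp [φ]
      rw [e1, e0, sub_zero, Real.norm_eq_abs, Real.norm_eq_abs, abs_of_nonneg (a := x 0 - lam)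
        (by linarith)] at this
      linarith
    have i1 := Lam_integrable hI hP.continuous.measurable (hA x)
    have i2 := Lam_integrable hI hP.continuous.measurable (hA xT)
    have e2 : Lam p P x = ∫ z, (d2 P x z - d2 P xT z) * fker p z := by
      rw [← sub_zero (Lam p P x), ← hLT]
      unfold Lam
      rw [← integral_sub i1 i2]
      congr 1; ext z; ring
    have e3 : A1 * IK n p * (x 0 - lam) = ∫ z : Eucl n, A1 * (x 0 - lam) * (q1 z * fker p z) := by
      rw [integral_const_mul]; unfold IK; ring
    rw [e2, e3, ← Real.norm_eq_abs]
    apply norm_integral_le_of_norm_le (hI.const_mul _)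
    refine ae_of_all _ fun z => ?_
    rw [Real.norm_eq_abs, abs_mul, abs_of_nonneg (fker_nonneg p z), ← mul_assoc]
    exact mul_le_mul_of_nonneg_right (hd z) (fker_nonneg p z)

end barrier

section asym
variable {n : ℕ} {p : ℝ}

lemma mol_comm {ρ σ v : Eucl n → ℝ} {ε ε' M : ℝ} (hρ : IsMol ρ ε) (hσ : IsMol σ ε')
    (hv : Measurable v) (hM : ∀ x, |v x| ≤ M) (x : Eucl n) :
    mol ρ (mol σ v) x = mol σ (mol ρ v) x := by
  have hintg : Integrable (fun q : Eucl n × Eucl n => ρ q.1 * (σ q.2 * v (x - q.1 - q.2)))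
      ((volume : Measure (Eucl n)).prod volume) := by
    have hb := (hρ.integrable.mul_prod (hσ.integrable.mul_const M))
    refine hb.mono' ?_ (ae_of_all _ ?_)
    · apply Measurable.aestronglyMeasurable
      apply (hρ.cont.measurable.comp measurable_fst).mul
      apply (hσ.cont.measurable.comp measurable_snd).mul
      exact hv.comp (by fun_prop)
    · rintro ⟨y, z⟩
      simp only [norm_mul, Real.norm_eq_abs, abs_of_nonneg (hρ.nonneg y),
        abs_of_nonneg (hσ.nonneg z)]
      exact mul_le_mul_of_nonneg_left (mul_le_mul_of_nonneg_left (hM _) (hσ.nonneg z)) (hρ.nonneg y)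
  have e1 : mol ρ (mol σ v) x = ∫ y, ∫ z, ρ y * (σ z * v (x - y - z)) := by
    unfold mol; congr 1; ext y; rw [integral_const_mul]
  have e2 : mol σ (mol ρ v) x = ∫ z, ∫ y, ρ y * (σ z * v (x - y - z)) := by
    unfold mol; congr 1; ext z; rw [← integral_const_mul]
    congr 1; ext y; rw [sub_right_comm]; ring
  rw [e1, e2, integral_integral_swap hintg]

/-- pointwise convergence of the mollification of a bounded family -/
lemma mol_tendsto {ρ : Eucl n → ℝ} {ε M : ℝ} (hρ : IsMol ρ ε) {N : ℝ → Eucl n → ℝ}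
    (hm : ∀ t > 0, Measurable (N t)) (hM : ∀ t > 0, ∀ x, |N t x| ≤ M)
    (hl : ∀ x, Tendsto (fun t => N t x) atTop (𝓝 0)) (x : Eucl n) :
    Tendsto (fun t => mol ρ (N t) x) atTop (𝓝 0) := by
  have : (0 : ℝ) = ∫ y : Eucl n, ρ y * 0 := by simp
  rw [this]
  apply tendsto_integral_filter_of_dominated_convergence (fun y => ρ y * M)
  · filter_upwards [eventually_gt_atTop 0] with t ht
    exact (mol_int hρ (hm t ht) (hM t ht) x).aestronglyMeasurable
  · filter_upwards [eventually_gt_atTop 0] with t ht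
    refine ae_of_all _ fun y => ?_
    rw [Real.norm_eq_abs, abs_mul, abs_of_nonneg (hρ.nonneg y)]
    exact mul_le_mul_of_nonneg_left (hM t ht _) (hρ.nonneg y)
  · exact hρ.integrable.mul_const M
  · exact ae_of_all _ fun y => (hl _).const_mul _

/-- local uniform convergence -/
lemma mol_unif {ρ : Eucl n → ℝ} {ε M : ℝ} (hρ : IsMol ρ ε) {N : ℝ → Eucl n → ℝ}
    (hm : ∀ t > 0, Measurable (N t)) (hM : ∀ t > 0, ∀ x, |N t x| ≤ M)
    (hn : ∀ t x, 0 ≤ N t x)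
    (hl : ∀ x, Tendsto (fun t => N t x) atTop (𝓝 0)) (x0 : Eucl n) (R : ℝ) {η : ℝ} (hη : 0 < η) :
    ∀ᶠ t in atTop, ∀ x ∈ closedBall x0 R, mol ρ (N t) x ≤ η := by
  have hind : IntegrableOn (fun _ : Eucl n => M) (closedBall x0 (R + ε)) := by
    apply integrableOn_const
    exact (measure_closedBall_lt_top).ne
    exact enorm_ne_top
  have h1 : Tendsto (fun t => ρ 0 * ∫ y in closedBall x0 (R + ε), N t y) atTop (𝓝 0) := by
    have h0 : ρ 0 * ∫ y in closedBall x0 (R + ε), (0 : ℝ) = 0 := by simp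
    rw [← h0]
    apply Tendsto.const_mul
    apply tendsto_integral_filter_of_dominated_convergence (fun _ => M)
    · filter_upwards [eventually_gt_atTop 0] with t ht using (hm t ht).aestronglyMeasurable
    · filter_upwards [eventually_gt_atTop 0] with t ht using ae_of_all _ fun y => hM t ht y
    · exact hind
    · exact ae_of_all _ fun y => hl y
  filter_upwards [h1.eventually (gt_mem_nhds hη), eventually_gt_atTop 0] with t ht ht0 x hx
  refine le_trans ?_ ht.le
  have hNi : IntegrableOn (N t) (closedBall x0 (R + ε)) :=
    hind.mono' (hm t ht0).aestronglyMeasurable (ae_of_all _ fun y => hM t ht0 y)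
  rw [mol_eq, ← integral_const_mul, ← integral_indicator measurableSet_closedBall]
  apply integral_mono (mol_int' hρ (hm t ht0) (hM t ht0) x)
  · exact (integrable_indicator_iff measurableSet_closedBall).2 (hNi.const_mul _)
  · intro y
    simp only
    by_cases hy : y ∈ closedBall x0 (R + ε)
    · rw [indicator_of_mem hy]
      exact mul_le_mul_of_nonneg_right (hρ.le_zero _) (hn t y)
    · rw [indicator_of_notMem hy]
      have : ρ (x - y) = 0 := by
        apply hρ.zero
        rw [← dist_eq_norm]
        simp only [mem_closedBall, not_le] at hy hx
        have h2 := dist_triangle y x x0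
        rw [dist_comm y x] at h2
        linarith
      simp [this]

lemma err_tendsto {ρ k : Eucl n → ℝ} {ε M : ℝ} (hρ : IsMol ρ ε) {N : ℝ → Eucl n → ℝ}
    (hm : ∀ t > 0, Measurable (N t)) (hM : ∀ t > 0, ∀ x, |N t x| ≤ M)
    (hl : ∀ x, Tendsto (fun t => N t x) atTop (𝓝 0)) (hk : Integrable k) :
    Tendsto (fun t => ∫ y, mol ρ (N t) y * k y) atTop (𝓝 0) := by
  have : (0 : ℝ) = ∫ y : Eucl n, 0 * k y := by simp
  rw [this]
  apply tendsto_integral_filter_of_dominated_convergence (fun y => M * ‖k y‖)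
  · filter_upwards [eventually_gt_atTop 0] with t ht
    exact (mol_cont hρ (hm t ht) (hM t ht)).aestronglyMeasurable.mul hk.aestronglyMeasurable
  · filter_upwards [eventually_gt_atTop 0] with t ht
    refine ae_of_all _ fun y => ?_
    rw [norm_mul]
    exact mul_le_mul_of_nonneg_right (mol_abs_le hρ fun z _ => hM t ht _) (norm_nonneg _)
  · exact hk.norm.const_mul M
  · exact ae_of_all _ fun y => (mol_tendsto hρ hm hM hl y).mul_const _

end asym


section main
variable {n : ℕ} [NeZero n] {lam : ℝ} {p κ C M : ℝ} {w w' : Eucl n → ℝ → ℝ}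

lemma coord_le (x y : Eucl n) : |x 0 - y 0| ≤ dist x y := by
  rw [dist_eq_norm]
  have := PiLp.norm_apply_le (x - y) 0
  simpa using this

lemma dini_half (h : TR {x : Eucl n | lam < x 0} p κ C M w w') {ρ : Eucl n → ℝ} {ε : ℝ}
    (hρ : IsMol ρ ε) {x : Eucl n} (hx : lam + ε < x 0) {t : ℝ} (ht : 0 < t) :
    DiniGE (fun τ => mol ρ (fun y => w y τ) x) t (HH p κ C w ρ x t) := by
  refine ahl_time h (x0 := x) (R := (ε + (x 0 - lam)) / 2) ?_ t ht x ρ ε hρ ?_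
  · intro y hy
    have h1 := coord_le y x
    have h2 := (abs_le.1 h1).1
    simp only [mem_closedBall] at hy
    simp only [mem_ofPred_eq]
    linarith
  · rw [dist_self]; linarith

lemma psi_cont (h : TR {x : Eucl n | lam < x 0} p κ C M w w') {tk : ℕ → ℝ}
    (htk : Tendsto tk atTop atTop) {ψ : Eucl n → ℝ}
    (hconv : ∀ η > 0, ∀ᶠ k in atTop, ∀ y : Eucl n, lam < y 0 → |w y (tk k) - ψ y| ≤ η)
    {x : Eucl n} (hx : lam < x 0) : ContinuousAt ψ x := by
  rw [Metric.continuousAt_iff']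
  intro η hη
  obtain ⟨k, hk, hk0⟩ := ((hconv (η / 4) (by positivity)).and
    (htk.eventually (eventually_gt_atTop 0))).exists
  have hc := Metric.continuousAt_iff'.1 (h.hxc (tk k) hk0 x hx) (η / 4) (by positivity)
  have ho : ∀ᶠ y : Eucl n in 𝓝 x, lam < y 0 :=
    (isOpen_lt continuous_const (by fun_prop : Continuous fun y : Eucl n => y 0)).mem_nhds hx
  filter_upwards [hc, ho] with y h1 h2
  rw [Real.dist_eq] at h1 ⊢
  have a1 := abs_le.1 (hk y h2)
  have a2 := abs_le.1 (hk x hx)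
  have a3 := abs_lt.1 h1
  rw [abs_lt]
  constructor <;> linarith [a1.1, a1.2, a2.1, a2.2, a3.1, a3.2]

lemma lower_near (h : TR {x : Eucl n | lam < x 0} p κ C M w w') {tk : ℕ → ℝ}
    (htk : Tendsto tk atTop atTop) {ψ : Eucl n → ℝ}
    (hconv : ∀ η > 0, ∀ᶠ k in atTop, ∀ y : Eucl n, lam < y 0 → |w y (tk k) - ψ y| ≤ η)
    {xs : Eucl n} (hx : lam < xs 0) (hpos : 0 < ψ xs) :
    ∃ (ε1 : ℝ) (ρ1 : Eucl n → ℝ) (m0 δ : ℝ), IsMol ρ1 ε1 ∧ 0 < m0 ∧ 0 < δ ∧ lam + 3 * ε1 < xs 0 ∧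
      ∀ᶠ k in atTop, δ < tk k ∧ ∀ x, dist x xs ≤ ε1 → ∀ t ∈ Icc (tk k - δ) (tk k),
        m0 ≤ mol ρ1 (fun y => w y t) x := by
  have hc := Metric.continuousAt_iff.1 (psi_cont h htk hconv hx) (ψ xs / 2) (by positivity)
  obtain ⟨r, hr, hrψ⟩ := hc
  have hε : 0 < min (r / 4) ((xs 0 - lam) / 4) := by
    have : 0 < xs 0 - lam := by linarith
    positivity
  obtain ⟨ε1, he⟩ : ∃ e, e = min (r / 4) ((xs 0 - lam) / 4) := ⟨_, rfl⟩
  rw [← he] at hε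
  have hε1 : ε1 ≤ r / 4 := he.trans_le (min_le_left _ _)
  have hε2 : ε1 ≤ (xs 0 - lam) / 4 := he.trans_le (min_le_right _ _)
  obtain ⟨ρ1, hρ⟩ := exists_mol (n := n) hε
  obtain ⟨A, hA0, hA⟩ := mol_d2_bound hρ
  have hIK := IK_nonneg n p
  have hM0 := h.hM0
  have hκ := h.hκ
  have hC := h.hC
  set K1 : ℝ := κ * (M * A * IK n p) + C * M with hK1
  have hK10 : 0 ≤ K1 := by positivity
  refine ⟨ε1, ρ1, ψ xs / 8, ψ xs / 8 / (K1 + 1), hρ, by positivity, by positivity, by linarith, ?_⟩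
  have hδ : 0 < ψ xs / 8 / (K1 + 1) := by positivity
  filter_upwards [htk.eventually (eventually_gt_atTop (ψ xs / 8 / (K1 + 1))),
    hconv (ψ xs / 4) (by positivity)] with k hk1 hk2
  refine ⟨hk1, fun x hxx t ht => ?_⟩
  have htk0 : 0 < tk k := hδ.trans hk1
  have ht0 : 0 < t := by linarith [ht.1]
  have hxl : lam + 2 * ε1 < x 0 := by
    have := (abs_le.1 (coord_le x xs)).1
    linarith
  have h1 : ψ xs / 4 ≤ mol ρ1 (fun y => w y (tk k)) x := by
    apply mol_ge hρ (h.hmeas _ htk0) (fun x => h.hM x _ htk0)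
    intro y hy
    have hy' := hρ.norm_lt hy
    have hd : dist (x - y) xs < r := by
      have := dist_triangle (x - y) x xs
      simp only [dist_self_sub_left] at this
      linarith
    have h2 := abs_lt.1 (hrψ hd)
    have h3 : lam < (x - y) 0 := by
      have h4 := (abs_le.1 (coord_le (x - y) x)).1
      simp only [dist_self_sub_left] at h4
      linarith
    have h4 := abs_le.1 (hk2 _ h3)
    linarith [h2.1, h4.1]
  have hg := ahl_dini_growth (g := fun τ => mol ρ1 (fun y => - w y τ) x) (r := -(K1 + 1)) ht.2
    ((molt_cont h.neg hρ x).mono (fun τ hτ => lt_of_lt_of_le ht0 hτ.1)) (by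
      intro τ hτ
      have hτ0 : 0 < τ := lt_of_lt_of_le ht0 hτ.1
      refine ⟨_, ?_, dini_half h.neg hρ (by linarith [hρ.pos]) hτ0⟩
      unfold HH
      have a1 := Lam_abs_le h.hI (hA _ (h.neg.hmeas τ hτ0) M (fun x => h.neg.hM x τ hτ0) x)
      have a2 := (abs_le.1 a1).2
      have a3 : mol ρ1 (fun y => |- w y τ|) x ≤ M := (le_abs_self _).trans
        (mol_abs_le hρ (fun z _ => by rw [abs_abs]; exact h.neg.hM _ τ hτ0))
      have a4 := mul_le_mul_of_nonneg_left a2 hκ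
      have a5 := mul_le_mul_of_nonneg_left a3 hC
      linarith)
  simp only [mol_fneg] at hg
  have h5 : (K1 + 1) * (tk k - t) ≤ ψ xs / 8 := by
    have : tk k - t ≤ ψ xs / 8 / (K1 + 1) := by linarith [ht.1]
    rw [le_div_iff₀ (by positivity)] at this
    linarith
  linarith

lemma mol_abs_le_add {ρ : Eucl n → ℝ} {ε : ℝ} (hρ : IsMol ρ ε) {t : ℝ}
    (hw : Measurable (fun x => w x t)) (hM : ∀ x, |w x t| ≤ M) {x : Eucl n} (hx : lam + ε < x 0) :
    mol ρ (fun y => |w y t|) x ≤ mol ρ (fun y => w y t) x + 2 * mol ρ (NegP lam w t) x := by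
  have i1 := mol_int hρ hw hM x
  have i2 := mol_int hρ (NegP_meas (lam := lam) hw) (NegP_le hM) x
  have i3 := mol_int hρ hw.abs (M := M) (fun x => by rw [abs_abs]; exact hM x) x
  unfold mol
  rw [← integral_const_mul, ← integral_add i1 (i2.const_mul 2)]
  apply integral_mono i3 (i1.add (i2.const_mul 2))
  intro y
  simp only [Pi.add_apply]
  by_cases hy : ρ y = 0
  · simp [hy]
  · have h1 := hρ.norm_lt hy
    have h2 : lam < (x - y) 0 := by
      have h4 := (abs_le.1 (coord_le (x - y) x)).1
      simp only [dist_self_sub_left] at h4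
      linarith
    have e : NegP lam w t (x - y) = max 0 (- w (x - y) t) := by
      unfold NegP; rw [indicator_of_mem]; exact h2
    have h3 : |w (x - y) t| ≤ w (x - y) t + 2 * max 0 (- w (x - y) t) := by
      rw [abs_le]
      constructor <;> rcases le_total 0 (w (x - y) t) with h | h
      · rw [max_eq_left (by linarith)]; linarith
      · rw [max_eq_right (by linarith)]; linarith
      · rw [max_eq_left (by linarith)]; linarith
      · rw [max_eq_right (by linarith)]; linarith
    rw [e]
    have := mul_le_mul_of_nonneg_left h3 (hρ.nonneg y)
    linarith

lemma d2_sub_smul (u v : Eucl n → ℝ) (c : ℝ) (x z : Eucl n) :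
    d2 (fun y => u y - c * v y) x z = d2 u x z - c * d2 v x z := by
  unfold d2; ring

lemma Lam_sub_smul {u v : Eucl n → ℝ} {c : ℝ} {x : Eucl n}
    (hu : Integrable (fun z => d2 u x z * fker p z)) (hv : Integrable (fun z => d2 v x z * fker p z)) :
    Lam p (fun y => u y - c * v y) x = Lam p u x - c * Lam p v x := by
  unfold Lam
  rw [← integral_const_mul, ← integral_sub hu (hv.const_mul c)]
  congr 1; ext z; rw [d2_sub_smul]; ring

end main


section P10
variable {n : ℕ} [NeZero n] {lam p κ C M : ℝ} {w w' : Eucl n → ℝ → ℝ}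

/-- the constant in the lower bound of the antisymmetric kernel -/
def cJ (p ε1 : ℝ) (ρ1 : Eucl n → ℝ) (x0 xs : Eucl n) : ℝ :=
  2 * ε1 / ((2 * ε1 + dist x0 xs) ^ 2 * (2 * ε1 + dist x0 xs) ^ p) / ρ1 0

lemma cJ_pos {ε1 : ℝ} {ρ1 : Eucl n → ℝ} (hρ1 : IsMol ρ1 ε1) (x0 xs : Eucl n) :
    0 < cJ p ε1 ρ1 x0 xs := by
  have := hρ1.pos
  have := hρ1.zero_pos
  unfold cJ
  have : 0 < 2 * ε1 + dist x0 xs := by positivity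
  positivity

lemma touch_est (h : TR {x : Eucl n | lam < x 0} p κ C M w w') (hp : 1 ≤ p)
    (hanti : ∀ t > 0, ∀ x, w (reflect lam x) t = - w x t)
    {ε ε1 m0 t c A Mp : ℝ} {ρ ρ1 P : Eucl n → ℝ} {x0 xs x : Eucl n}
    (hρ : IsMol ρ ε) (hρ1 : IsMol ρ1 ε1) (hε : ε ≤ ε1) (hx0 : x0 0 = lam)
    (hxs : lam + 3 * ε1 < xs 0) (ht : 0 < t)
    (hm : ∀ x, dist x xs ≤ ε1 → m0 ≤ mol ρ1 (fun y => w y t) x)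
    (hPc : Continuous P) (hPd : ∀ x z, |d2 P x z| ≤ A * q1 z)
    (hPa : ∀ x, P (reflect lam x) = - P x) (hPz : ∀ x, ε1 ≤ dist x x0 → P x = 0)
    (hPM : ∀ x, |P x| ≤ Mp)
    (hx : lam < x 0) (hxr : dist x x0 ≤ ε1) (hc : 0 ≤ c)
    (hvx : mol ρ (fun y => w y t) x - c * P x ≤ 0)
    (hmin : ∀ y : Eucl n, lam < y 0 → y ∈ ball x0 (2 * ε1) →
      mol ρ (fun y => w y t) x - c * P x ≤ mol ρ (fun y => w y t) y - c * P y) :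
    cJ p ε1 ρ1 x0 xs * (x 0 - lam) * m0
      - 2 ^ p * ∫ y, mol ρ (NegP lam w t) y *
          (ball x0 (2 * ε1))ᶜ.indicator (fun y => fker p (y - x0)) y
      ≤ - (1 / 2) * (Lam p (mol ρ (fun y => w y t)) x - c * Lam p P x) := by
  have hε1 := hρ1.pos
  have hr := hρ1.zero_pos
  have hwm := h.hmeas t ht
  have hwM := fun x => h.hM x t ht
  have hmolM : ∀ y, |mol ρ (fun y => w y t) y| ≤ M := fun y => mol_abs_le hρ fun z _ => hwM _
  have hmolc : Continuous (mol ρ (fun y => w y t)) := mol_cont hρ hwm hwM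
  obtain ⟨A0, hA0, hd2⟩ := mol_d2_bound hρ
  have hPI := Lam_integrable h.hI hPc.measurable (hPd x)
  rw [← Lam_sub_smul (mol_Lam_int h hρ ht x) hPI]
  set J := cJ p ε1 ρ1 x0 xs with hJ
  have hJ0 : 0 < J := cJ_pos hρ1 x0 xs
  -- points of the support of the density
  have hsup : ∀ y, ρ1 (xs - y) ≠ 0 → lam + 2 * ε1 < y 0 ∧ 2 * ε1 ≤ dist y x0 ∧ dist y xs < ε1 := by
    intro y hy
    have h1 := hρ1.norm_lt hy
    rw [← dist_eq_norm] at h1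
    have h2 := (abs_le.1 (coord_le xs y)).2
    have h3 := (abs_le.1 (coord_le y x0)).2
    rw [dist_comm] at h1
    rw [dist_comm] at h2
    refine ⟨by linarith, by linarith, h1⟩
  have key := touch_lemma (lam := lam) (p := p) h.hI (by linarith)
    (v := fun y => mol ρ (fun y => w y t) y - c * P y) (e := mol ρ (NegP lam w t))
    (g := fun y => J * (x 0 - lam) * ρ1 (xs - y)) (x0 := x0) (x := x) (r0 := ε1)
    (A := M * A0 + c * A) (M' := M + c * Mp) (Me := M) hε1
    (hmolc.sub (hPc.const_mul c |>.congr fun _ => rfl)).measurable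
    (fun y => by
      refine (abs_sub _ _).trans (add_le_add (hmolM y) ?_)
      rw [abs_mul, abs_of_nonneg hc]
      exact mul_le_mul_of_nonneg_left (hPM y) hc)
    (fun y => by
      show mol ρ (fun y => w y t) (reflect lam y) - c * P (reflect lam y) = _
      rw [mol_antisymm hρ (hanti t ht), hPa]; ring)
    (fun z => by
      rw [d2_sub_smul]
      refine (abs_sub _ _).trans ?_
      rw [add_mul]
      refine add_le_add (hd2 _ hwm M hwM x z) ?_
      rw [abs_mul, abs_of_nonneg hc, mul_assoc]
      exact mul_le_mul_of_nonneg_left (hPd x z) hc)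
    hx hxr hvx hmin
    (mol_cont hρ (NegP_meas hwm) (NegP_le hwM)).measurable
    (fun y => mol_abs_le hρ fun z _ => NegP_le hwM _)
    (fun y => integral_nonneg fun z => mul_nonneg (hρ.nonneg _) (NegP_nonneg _ _ _))
    (fun y hy hyb => by
      have : P y = 0 := hPz y (by
        rw [mem_ball, not_lt] at hyb; linarith)
      show _ ≤ mol ρ (fun y => w y t) y - c * P y
      rw [this]
      have := mol_ge_neg hρ hwm hwM (hanti t ht) hy.le
      linarith)
    ((hρ1.integrable.comp_sub_left xs).const_mul _)
    (fun y => mul_nonneg (mul_nonneg hJ0.le (by linarith)) (hρ1.nonneg _))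
    (fun y hy => by
      show J * (x 0 - lam) * ρ1 (xs - y) = 0
      by_cases h0 : ρ1 (xs - y) = 0
      · rw [h0, mul_zero]
      · have := (hsup y h0).2.1
        rw [mem_ball] at hy; linarith)
    (fun y hy => by
      show J * (x 0 - lam) * ρ1 (xs - y) = 0
      by_cases h0 : ρ1 (xs - y) = 0
      · rw [h0, mul_zero]
      · have := (hsup y h0).1
        linarith)
    (fun y hy hyb => by
      show J * (x 0 - lam) * ρ1 (xs - y) ≤ _
      have hxy : x ≠ y := by
        rintro rfl; apply hyb; rw [mem_ball]; linarith
      by_cases h0 : ρ1 (xs - y) = 0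
      · rw [h0, mul_zero, sub_nonneg]
        refine fker_anti (by linarith) (sub_ne_zero.2 hxy) ?_
        refine le_of_sq_le_sq ?_ (norm_nonneg _)
        rw [reflect_norm_sq]
        have : 0 < (x 0 - lam) * (y 0 - lam) := mul_pos (by linarith) (by linarith)
        linarith
      · obtain ⟨h1, h2, h3⟩ := hsup y h0
        have hD : ‖x - reflect lam y‖ ≤ 2 * ε1 + dist x0 xs := by
          have e1 : ‖x - reflect lam y‖ ≤ ‖x - x0‖ + ‖x0 - reflect lam y‖ := by
            have := norm_add_le (x - x0) (x0 - reflect lam y)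
            simpa using this
          rw [← reflect_dist' x0 y, reflect_of_mem hx0, ← dist_eq_norm x x0, ← dist_eq_norm x0 y] at e1
          have := dist_triangle x0 xs y
          rw [dist_comm xs y] at this
          linarith
        have e2 := J_lower hp hx hε1 (by linarith) hxy hD
        refine le_trans ?_ e2
        have e3 : J * ρ1 (xs - y) ≤ 2 * ε1 / ((2 * ε1 + dist x0 xs) ^ 2 * (2 * ε1 + dist x0 xs) ^ p) := by
          refine (mul_le_mul_of_nonneg_left (hρ1.le_zero _) hJ0.le).trans (le_of_eq ?_)
          rw [hJ, cJ, div_mul_cancel₀ _ hr.ne']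
        have := mul_le_mul_of_nonneg_right e3 (by linarith : 0 ≤ x 0 - lam)
        linarith)
  have hintg : ∫ y, J * (x 0 - lam) * ρ1 (xs - y) * (mol ρ (fun y => w y t) y - c * P y)
      = J * (x 0 - lam) * mol ρ1 (mol ρ (fun y => w y t)) xs := by
    rw [mol_eq, ← integral_const_mul]
    refine integral_congr_ae (Eventually.of_forall fun y => ?_)
    show J * (x 0 - lam) * ρ1 (xs - y) * (mol ρ (fun y => w y t) y - c * P y) =
      J * (x 0 - lam) * (ρ1 (xs - y) * mol ρ (fun y => w y t) y)
    by_cases h0 : ρ1 (xs - y) = 0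
    · rw [h0]; ring
    · rw [hPz y (by linarith [(hsup y h0).2.1])]; ring
  have hge : m0 ≤ mol ρ1 (mol ρ (fun y => w y t)) xs := by
    rw [mol_comm hρ1 hρ hwm hwM]
    refine mol_ge hρ (mol_cont hρ1 hwm hwM).measurable
      (M := M) (fun y => mol_abs_le hρ1 fun z _ => hwM _) fun y hy => hm _ ?_
    rw [dist_eq_norm, sub_sub_cancel_left, norm_neg]
    exact (hρ.norm_lt hy).le.trans hε
  have key2 : (∫ y, J * (x 0 - lam) * ρ1 (xs - y) * (mol ρ (fun y => w y t) y - c * P y))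
      - 2 ^ p * ∫ y, mol ρ (NegP lam w t) y *
          (ball x0 (2 * ε1))ᶜ.indicator (fun y => fker p (y - x0)) y
      ≤ - (1 / 2) * Lam p (fun y => mol ρ (fun y => w y t) y - c * P y) x := key
  rw [hintg] at key2
  have := mul_le_mul_of_nonneg_left hge (mul_nonneg hJ0.le (by linarith : 0 ≤ x 0 - lam))
  linarith

end P10


section P11
variable {n : ℕ} [NeZero n] {lam p κ C M : ℝ} {w w' : Eucl n → ℝ → ℝ}

set_option maxHeartbeats 4000000 in
lemma ahl_compare (h : TR {x : Eucl n | lam < x 0} p κ C M w w') (hp : 1 ≤ p)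
    (hanti : ∀ t > 0, ∀ x, w (reflect lam x) t = - w x t)
    {ε ε1 m0 A A2 Mp a δ κ0 η0 η1 : ℝ} {ρ ρ1 P : Eucl n → ℝ} {x0 xs : Eucl n}
    (hρ : IsMol ρ ε) (hρ1 : IsMol ρ1 ε1) (hε : ε ≤ ε1) (hx0 : x0 0 = lam)
    (hxs : lam + 3 * ε1 < xs 0) (ha : 0 < a) (hδ : 0 < δ) (hκ0 : 0 < κ0) (hη0 : 0 < η0)
    (hm : ∀ t ∈ Icc a (a + δ), ∀ x, dist x xs ≤ ε1 → m0 ≤ mol ρ1 (fun y => w y t) x)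
    (hPc : Continuous P) (hPd : ∀ x z, |d2 P x z| ≤ A * q1 z)
    (hPa : ∀ x, P (reflect lam x) = - P x) (hPz : ∀ x, ε1 ≤ dist x x0 → P x = 0)
    (hPM : ∀ x, |P x| ≤ Mp) (hP0 : ∀ x : Eucl n, lam ≤ x 0 → 0 ≤ P x)
    (hP1 : ∀ x : Eucl n, lam ≤ x 0 → P x ≤ x 0 - lam)
    (hPL : ∀ x : Eucl n, lam ≤ x 0 → |Lam p P x| ≤ A2 * (x 0 - lam))
    (he : ∀ t ∈ Icc a (a + δ), ∀ y ∈ closedBall x0 (2 * ε1), mol ρ (NegP lam w t) y ≤ η1)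
    (hη1 : η1 ≤ η0 / 2) (hη2 : 2 * C * η1 ≤ η0 / 4)
    (herr : ∀ t ∈ Icc a (a + δ), 2 * κ * (2 ^ p * ∫ y, mol ρ (NegP lam w t) y *
          (ball x0 (2 * ε1))ᶜ.indicator (fun y => fker p (y - x0)) y) ≤ η0 / 4)
    (hκε : κ0 * (2 * ε) ≤ η0 / 2)
    (hκκ : κ0 * (κ * A2 + C + 1 / δ) ≤ 2 * κ * cJ p ε1 ρ1 x0 xs * m0)
    (x : Eucl n) (hx1 : dist x x0 ≤ ε1) (hx2 : lam + 2 * ε ≤ x 0) :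
    κ0 * P x - η0 * (1 + δ) < mol ρ (fun y => w y (a + δ)) x := by
  have hε0 := hρ.pos
  have hε1 := hρ1.pos
  have hκ := h.hκ
  have hC := h.hC
  have hXc : IsCompact (closedBall x0 ε1 ∩ {x : Eucl n | lam + 2 * ε ≤ x 0}) :=
    (isCompact_closedBall x0 ε1).inter_right (isClosed_le continuous_const (by fun_prop))
  have low : ∀ t ∈ Icc a (a + δ), ∀ y ∈ closedBall x0 (2 * ε1), lam < y 0 →
      -η1 ≤ mol ρ (fun y => w y t) y := by
    intro t ht y hy hy0
    have ht0 : 0 < t := lt_of_lt_of_le ha ht.1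
    have := mol_ge_neg hρ (h.hmeas t ht0) (fun x => h.hM x t ht0) (hanti t ht0) hy0.le
    have := he t ht y hy
    linarith
  have main := ahl_first_touch (a := a) (T := a + δ) hXc
    (u := fun x t => mol ρ (fun y => w y t) x - κ0 * ((t - a) / δ) * P x + η0 * (1 + (t - a)))
    (by
      refine ContinuousOn.add (ContinuousOn.sub ?_ ?_) ?_
      · refine (mol_joint hρ h.hmeas h.hM h.hc).mono ?_
        rintro ⟨y, t⟩ ⟨_, hy⟩
        exact ⟨mem_univ _, lt_of_lt_of_le ha hy.1⟩
      · refine Continuous.continuousOn ?_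
        have := hPc.comp (continuous_fst (X := Eucl n) (Y := ℝ))
        exact (by fun_prop : Continuous fun q : Eucl n × ℝ => κ0 * ((q.2 - a) / δ)).mul this
      · exact Continuous.continuousOn (by fun_prop))
    (by
      intro y hy
      have hya : a ∈ Icc a (a + δ) := ⟨le_rfl, by linarith⟩
      have h2 : lam + 2 * ε ≤ y 0 := hy.2
      have := low a hya y (closedBall_subset_closedBall (by linarith) hy.1) (by linarith)
      simp only [sub_self, zero_div, mul_zero, zero_mul, add_zero, mul_one]
      linarith)
    (by
      intro t ht y hy hut hmin
      have htI : t ∈ Icc a (a + δ) := ⟨ht.1.le, ht.2⟩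
      have ht0 : 0 < t := ha.trans ht.1
      have hy1 : dist y x0 ≤ ε1 := hy.1
      have hy2 : lam + 2 * ε ≤ y 0 := hy.2
      have hy3 : lam < y 0 := by linarith
      have hta : 0 < t - a := sub_pos.2 ht.1
      set c := κ0 * ((t - a) / δ) with hcdef
      have hc0 : 0 ≤ c := by positivity
      have hc1 : c ≤ κ0 := by
        have : (t - a) / δ ≤ 1 := (div_le_one hδ).2 (by linarith [ht.2])
        nlinarith
      have hηt : 0 ≤ η0 * (t - a) := by positivity
      have hut' : mol ρ (fun y => w y t) y - c * P y = -(η0 * (1 + (t - a))) := by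
        have : mol ρ (fun y => w y t) y - c * P y + η0 * (1 + (t - a)) = 0 := hut
        linarith
      have est := touch_est h hp hanti hρ hρ1 hε hx0 hxs ht0 (hm t htI) hPc hPd hPa hPz hPM hy3 hy1
        hc0 (by rw [hut']; nlinarith)
        (by
          intro z hz hzb
          rw [hut']
          by_cases hz1 : dist z x0 ≤ ε1
          · by_cases hz2 : lam + 2 * ε ≤ z 0
            · have : 0 ≤ mol ρ (fun y => w y t) z - c * P z + η0 * (1 + (t - a)) :=
                hmin z ⟨hz1, hz2⟩
              linarith
            · have l1 := low t htI z (ball_subset_closedBall hzb) hz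
              have l2 : P z ≤ 2 * ε := by linarith [hP1 z hz.le, not_le.1 hz2]
              have l3 : c * P z ≤ κ0 * (2 * ε) :=
                mul_le_mul hc1 l2 (hP0 z hz.le) hκ0.le
              linarith
          · have l1 := low t htI z (ball_subset_closedBall hzb) hz
            rw [hPz z (not_le.1 hz1).le]
            linarith)
      have herr' := herr t htI
      set Err := 2 ^ p * ∫ y, mol ρ (NegP lam w t) y *
          (ball x0 (2 * ε1))ᶜ.indicator (fun y => fker p (y - x0)) y with hErr
      have hX0 : 0 < y 0 - lam := by linarith
      have b1 : c * Lam p P y ≤ κ0 * (A2 * (y 0 - lam)) := by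
        refine (mul_le_mul_of_nonneg_left ((le_abs_self _).trans (hPL y hy3.le)) hc0).trans ?_
        exact mul_le_mul_of_nonneg_right hc1 ((abs_nonneg _).trans (hPL y hy3.le))
      have b2 := mol_abs_le_add hρ (h.hmeas t ht0) (fun x => h.hM x t ht0) (x := y)
        (by linarith : lam + ε < y 0)
      have b3 := he t htI y (closedBall_subset_closedBall (by linarith) hy.1)
      have b4 : c * P y ≤ κ0 * (y 0 - lam) :=
        mul_le_mul hc1 (hP1 y hy3.le) (hP0 y hy3.le) hκ0.le
      have b5 : mol ρ (fun y => |w y t|) y ≤ κ0 * (y 0 - lam) + 2 * η1 := by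
        linarith
      have b6 := mul_le_mul_of_nonneg_left b5 hC
      have b7 := mul_le_mul_of_nonneg_left est (by linarith : 0 ≤ 2 * κ)
      have b8 := mul_le_mul_of_nonneg_left b1 hκ
      have b9 := mul_le_mul_of_nonneg_right hκκ hX0.le
      have b10 : κ0 * P y / δ ≤ κ0 * (y 0 - lam) * (1 / δ) := by
        rw [div_eq_mul_one_div]
        gcongr
        exact hP1 y hy3.le
      have hHH : κ0 * P y / δ - η0 < HH p κ C w ρ y t := by
        unfold HH
        nlinarith
      obtain ⟨t', ht', hle⟩ := ahl_left (α := a) (β := t + 1) (t := t)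
        (g := fun τ => mol ρ (fun z => w z τ) y) (H := HH p κ C w ρ y)
        ((molt_cont h hρ y).mono fun τ hτ => ha.trans hτ.1)
        ((HH_cont h hρ y).mono fun τ hτ => ha.trans hτ.1)
        (fun τ hτ => dini_half h hρ (by linarith) (ha.trans hτ.1))
        ⟨ht.1, by linarith⟩ hHH
      refine ⟨t', ⟨ht'.1.le, ht'.2⟩, ?_⟩
      show mol ρ (fun z => w z t') y - κ0 * ((t' - a) / δ) * P y + η0 * (1 + (t' - a)) ≤ 0
      have hle' : (κ0 * P y / δ - η0) * (t - t') ≤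
        mol ρ (fun z => w z t) y - mol ρ (fun z => w z t') y := hle
      have e1 : κ0 * ((t' - a) / δ) * P y = c * P y - κ0 * P y / δ * (t - t') := by
        rw [hcdef]; ring
      rw [e1]
      nlinarith)
  have := main x ⟨hx1, hx2⟩ (a + δ) ⟨by linarith, le_rfl⟩
  simp only [add_sub_cancel_left, div_self hδ.ne', mul_one] at this
  linarith

end P11


section P12
variable {n : ℕ} [NeZero n] {lam p κ C M : ℝ} {w w' : Eucl n → ℝ → ℝ}

lemma NegP_tendsto
    (hliminf : ∀ x : Eucl n, lam < x 0 → ∀ ε > (0 : ℝ), ∀ᶠ t in atTop, -ε ≤ w x t) (y : Eucl n) :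
    Tendsto (fun t => NegP lam w t y) atTop (𝓝 0) := by
  by_cases hy : lam < y 0
  · rw [Metric.tendsto_nhds]
    intro e he
    filter_upwards [hliminf y hy (e / 2) (by positivity)] with t ht
    have h1 : NegP lam w t y = max 0 (-w y t) := by
      unfold NegP; rw [indicator_of_mem]; exact hy
    rw [h1, Real.dist_eq, sub_zero, abs_of_nonneg (le_max_left _ _)]
    exact max_lt he (by linarith)
  · have : ∀ t, NegP lam w t y = 0 := by
      intro t; unfold NegP; rw [indicator_of_notMem]; exact hy
    simp only [this]; exact tendsto_const_nhds

lemma ahl_main (h : TR {x : Eucl n | lam < x 0} p κ C M w w') (hκ : 0 < κ) (hp : 1 ≤ p)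
    (hanti : ∀ t > 0, ∀ x, w (reflect lam x) t = - w x t)
    (hliminf : ∀ x : Eucl n, lam < x 0 → ∀ ε > (0 : ℝ), ∀ᶠ t in atTop, -ε ≤ w x t)
    {tk : ℕ → ℝ} (htk : Tendsto tk atTop atTop) {ψ : Eucl n → ℝ}
    (hconv : ∀ η > 0, ∀ᶠ k in atTop, ∀ y : Eucl n, lam < y 0 → |w y (tk k) - ψ y| ≤ η)
    {xs x0 : Eucl n} (hxs : lam < xs 0) (hpos : 0 < ψ xs) (hx0 : x0 0 = lam) :
    ∃ κ0 > 0, ∃ r > 0, ∀ x : Eucl n, lam < x 0 → dist x x0 ≤ r → κ0 * (x 0 - lam) ≤ ψ x := by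
  obtain ⟨ε1, ρ1, m0, δ, hρ1, hm0, hδ, hxs3, hev⟩ := lower_near h htk hconv hxs hpos
  have hε1 := hρ1.pos
  obtain ⟨P, A, A2, hPc, hPd, hA2, hPa, hP0, hP1, hPz, hPlin, ⟨Mp, hPM⟩, hPL⟩ :=
    barrier h.hI hx0 hε1
  have hJ : 0 < cJ p ε1 ρ1 x0 xs := cJ_pos hρ1 x0 xs
  have hC := h.hC
  have hden : 0 < κ * A2 + C + 1 / δ := by positivity
  obtain ⟨κ0, hκdef⟩ : ∃ κ0, κ0 = 2 * κ * cJ p ε1 ρ1 x0 xs * m0 / (κ * A2 + C + 1 / δ) := ⟨_, rfl⟩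
  have hκ0 : 0 < κ0 := by rw [hκdef]; positivity
  have hκκ : κ0 * (κ * A2 + C + 1 / δ) ≤ 2 * κ * cJ p ε1 ρ1 x0 xs * m0 := by
    rw [hκdef, div_mul_cancel₀ _ hden.ne']
  refine ⟨κ0, hκ0, ε1 / 2, by positivity, fun x hx hxd => ?_⟩
  rw [← hPlin x hxd]
  refine le_of_forall_pos_le_add fun e he => ?_
  obtain ⟨η0, hη0, hηe⟩ : ∃ η0 > 0, η0 * (3 + δ) = e :=
    ⟨e / (3 + δ), by positivity, by field_simp⟩
  obtain ⟨d, hd, hψd⟩ := Metric.continuousAt_iff.1 (psi_cont h htk hconv hx) η0 hη0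
  obtain ⟨ε, hε, hεd, hεx, hεε, hεκ⟩ : ∃ ε > 0, ε ≤ d ∧ ε ≤ (x 0 - lam) / 2 ∧ ε ≤ ε1 ∧
      ε ≤ η0 / (4 * κ0) := by
    refine ⟨min (min d ((x 0 - lam) / 2)) (min ε1 (η0 / (4 * κ0))), ?_, ?_, ?_, ?_, ?_⟩
    · have : 0 < x 0 - lam := by linarith
      have : 0 < η0 / (4 * κ0) := by positivity
      exact lt_min (lt_min hd (by linarith)) (lt_min hε1 this)
    · exact (min_le_left _ _).trans (min_le_left _ _)
    · exact (min_le_left _ _).trans (min_le_right _ _)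
    · exact (min_le_right _ _).trans (min_le_left _ _)
    · exact (min_le_right _ _).trans (min_le_right _ _)
  obtain ⟨ρ, hρ⟩ := exists_mol (n := n) hε
  obtain ⟨η1, hηp, hη1, hη2⟩ : ∃ η1 > 0, η1 ≤ η0 / 2 ∧ 2 * C * η1 ≤ η0 / 4 := by
    refine ⟨min (η0 / 2) (η0 / (8 * (C + 1))), by positivity, min_le_left _ _, ?_⟩
    refine (mul_le_mul_of_nonneg_left (min_le_right _ _) (by positivity)).trans ?_
    rw [← mul_div_assoc, div_le_iff₀ (by positivity)]
    nlinarith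
  have hm : ∀ t > 0, Measurable (NegP lam w t) := fun t ht => NegP_meas (h.hmeas t ht)
  have hM : ∀ t > 0, ∀ x, |NegP lam w t x| ≤ M := fun t ht => NegP_le fun x => h.hM x t ht
  have hl := NegP_tendsto hliminf
  have E1 := mol_unif hρ hm hM (fun t x => NegP_nonneg w t x) hl x0 (2 * ε1) hηp
  have E2 : ∀ᶠ t in atTop, 2 * κ * (2 ^ p * ∫ y, mol ρ (NegP lam w t) y *
          (ball x0 (2 * ε1))ᶜ.indicator (fun y => fker p (y - x0)) y) ≤ η0 / 4 := by
    have := ((err_tendsto hρ hm hM hl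
      (fker_out_int h.hI x0 (by positivity : 0 < 2 * ε1))).const_mul (2 ^ p)).const_mul (2 * κ)
    rw [mul_zero, mul_zero] at this
    exact this.eventually (eventually_le_nhds (by positivity))
  obtain ⟨T0, hT0⟩ := eventually_atTop.1 (E1.and E2)
  obtain ⟨k, ⟨⟨hk1, hk2⟩, hk3⟩, hk4⟩ := ((hev.and (hconv η0 hη0)).and
    (htk.eventually (eventually_ge_atTop (T0 + δ)))).exists
  have hpk : 0 < tk k := hδ.trans hk1
  have cmp := ahl_compare h hp hanti (a := tk k - δ) (δ := δ) (κ0 := κ0) (η0 := η0) (η1 := η1)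
    hρ hρ1 hεε hx0 hxs3 (by linarith) hδ hκ0 hη0
    (fun t ht y hy => hk2 y hy t (by rwa [sub_add_cancel] at ht))
    hPc hPd hPa hPz hPM hP0 hP1 hPL
    (fun t ht => (hT0 t (by linarith [ht.1])).1) hη1 hη2
    (fun t ht => (hT0 t (by linarith [ht.1])).2)
    (by
      have := mul_le_mul_of_nonneg_left hεκ (by positivity : 0 ≤ 2 * κ0)
      have e3 : 2 * κ0 * (η0 / (4 * κ0)) = η0 / 2 := by field_simp; norm_num
      linarith) hκκ x (by linarith) (by linarith)
  rw [sub_add_cancel] at cmp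
  have up : mol ρ (fun y => w y (tk k)) x ≤ ψ x + 2 * η0 := by
    have := mol_ge hρ (v := fun y => - w y (tk k)) (h.hmeas _ hpk).neg (M := M)
      (fun x => by rw [abs_neg]; exact h.hM x _ hpk) (c := -(ψ x + 2 * η0)) (x := x)
      (fun y hy => by
        have hyn := hρ.norm_lt hy
        have hdist : dist (x - y) x = ‖y‖ := by
          rw [dist_eq_norm, sub_sub_cancel_left, norm_neg]
        have h1 := (abs_le.1 (coord_le (x - y) x)).1
        rw [hdist] at h1
        have h2 := hk3 (x - y) (by linarith)
        have h3 := hψd (by rw [hdist]; linarith : dist (x - y) x < d)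
        rw [Real.dist_eq] at h3
        have h4 := (abs_le.1 h2).2
        have h5 := (abs_lt.1 h3).2
        show _ ≤ - w (x - y) (tk k)
        linarith)
    rw [mol_fneg] at this
    linarith
  nlinarith

end P12


section P13
variable {n : ℕ} [NeZero n] {lam : ℝ}

lemma hyper_null : volume {x : Eucl n | x 0 = lam} = 0 := by
  have h0 : volume ((LinearMap.ker (EuclideanSpace.proj (𝕜 := ℝ) (0 : Fin n) :
      Eucl n →L[ℝ] ℝ).toLinearMap : Submodule ℝ (Eucl n)) : Set (Eucl n)) = 0 := by
    refine Measure.addHaar_submodule _ _ ?_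
    intro h
    have : EuclideanSpace.single (0 : Fin n) (1 : ℝ) ∈ LinearMap.ker
      (EuclideanSpace.proj (𝕜 := ℝ) (0 : Fin n) : Eucl n →L[ℝ] ℝ).toLinearMap := by
      rw [h]; trivial
    simp at this
  have h1 : {x : Eucl n | x 0 = lam} =
      (fun x => x + (-lam) • EuclideanSpace.single (0 : Fin n) (1 : ℝ)) ⁻¹'
        ((LinearMap.ker (EuclideanSpace.proj (𝕜 := ℝ) (0 : Fin n) :
      Eucl n →L[ℝ] ℝ).toLinearMap : Submodule ℝ (Eucl n)) : Set (Eucl n)) := by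
    ext x
    simp [add_neg_eq_zero]
  rw [h1, measure_preimage_add_right, h0]

lemma fraclap_eq {Cns s L M A : ℝ} {u v : Eucl n → ℝ} {x : Eucl n}
    (hI : Integrable (fun z : Eucl n => q1 z * fker ((n : ℝ) + 2 * s) z))
    (hv : Measurable v) (hM : ∀ y, |v y| ≤ M) (huv : u =ᵐ[volume] v) (hx : u x = v x)
    (hA : ∀ z, |d2 v x z| ≤ A * q1 z) (hL : IsFracLap Cns s u x L) :
    L = Cns / 2 * Lam ((n : ℝ) + 2 * s) v x := by
  set p := (n : ℝ) + 2 * s with hp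
  have hLI := Lam_integrable hI hv hA
  have step : ∀ ε > 0, ∫ y in {y : Eucl n | ε < dist x y}, (u x - u y) / dist x y ^ p =
      (1 / 2) * ∫ z, {z : Eucl n | ε < ‖z‖}.indicator (fun z => d2 v x z * fker p z) z := by
    intro ε hε
    set F : Eucl n → ℝ := {z : Eucl n | ε < ‖z‖}.indicator (fun z => (v x - v (x + z)) * fker p z)
      with hF
    have hS : MeasurableSet {z : Eucl n | ε < ‖z‖} := measurableSet_lt measurable_const measurable_norm
    have hS' : MeasurableSet {y : Eucl n | ε < dist x y} :=
      measurableSet_lt measurable_const (by fun_prop)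
    have hFi : Integrable F := by
      have h1 := (fker_out_int hI (0 : Eucl n) hε).const_mul (2 * M)
      refine h1.mono' ?_ (Eventually.of_forall fun z => ?_)
      · refine (Measurable.indicator ?_ hS).aestronglyMeasurable
        exact (measurable_const.sub (hv.comp (measurable_const_add x))).mul (fker_meas p)
      · by_cases hz : ε < ‖z‖
        · have m1 : z ∈ {z : Eucl n | ε < ‖z‖} := hz
          have m2 : z ∈ (ball (0 : Eucl n) ε)ᶜ := by
            rw [mem_compl_iff, mem_ball_zero_iff, not_lt]; exact hz.le
          rw [hF, indicator_of_mem m1, indicator_of_mem m2, sub_zero, Real.norm_eq_abs, abs_mul,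
            abs_of_nonneg (fker_nonneg p z)]
          refine mul_le_mul_of_nonneg_right ?_ (fker_nonneg p z)
          refine (abs_sub _ _).trans ?_
          linarith [hM x, hM (x + z)]
        · have m1 : z ∉ {z : Eucl n | ε < ‖z‖} := hz
          rw [hF, indicator_of_notMem m1, norm_zero]
          refine mul_nonneg (by linarith [(abs_nonneg _).trans (hM x)])
            (indicator_nonneg (fun y _ => fker_nonneg p _) _)
    have e1 : ∫ y in {y : Eucl n | ε < dist x y}, (u x - u y) / dist x y ^ p = ∫ z, F z := by
      rw [← integral_indicator hS', ← integral_sub_right_eq_self F x]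
      refine integral_congr_ae ?_
      filter_upwards [huv] with y hy
      by_cases hz : ε < dist x y
      · have m1 : y ∈ {y : Eucl n | ε < dist x y} := hz
        have m2 : y - x ∈ {z : Eucl n | ε < ‖z‖} := by
          show ε < ‖y - x‖
          rwa [← dist_eq_norm, dist_comm]
        rw [indicator_of_mem m1, hF, indicator_of_mem m2, hx, hy, add_sub_cancel, fker,
          ← dist_eq_norm, dist_comm y x, mul_one_div]
      · have m1 : y ∉ {y : Eucl n | ε < dist x y} := hz
        have m2 : y - x ∉ {z : Eucl n | ε < ‖z‖} := by
          show ¬ ε < ‖y - x‖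
          rwa [← dist_eq_norm, dist_comm]
        rw [indicator_of_notMem m1, hF, indicator_of_notMem m2]
    have e2 : ∫ z, F (-z) = ∫ z, F z := integral_neg_eq_self F volume
    have e3 : ∫ z, {z : Eucl n | ε < ‖z‖}.indicator (fun z => d2 v x z * fker p z) z =
        (∫ z, F z) + ∫ z, F (-z) := by
      rw [← integral_add hFi hFi.comp_neg]
      refine integral_congr_ae (Eventually.of_forall fun z => ?_)
      show _ = F z + F (-z)
      by_cases hz : ε < ‖z‖
      · have m1 : z ∈ {z : Eucl n | ε < ‖z‖} := hz
        have m2 : -z ∈ {z : Eucl n | ε < ‖z‖} := by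
          show ε < ‖-z‖
          rwa [norm_neg]
        simp only [hF]
        rw [indicator_of_mem m1, indicator_of_mem m1, indicator_of_mem m2, fker_neg, d2,
          ← sub_eq_add_neg]
        ring
      · have m1 : z ∉ {z : Eucl n | ε < ‖z‖} := hz
        have m2 : -z ∉ {z : Eucl n | ε < ‖z‖} := by
          show ¬ ε < ‖-z‖
          rwa [norm_neg]
        simp only [hF]
        rw [indicator_of_notMem m1, indicator_of_notMem m1, indicator_of_notMem m2, add_zero]
    rw [e1, e3, e2]; ring
  have lim : Tendsto (fun ε : ℝ => ∫ z, {z : Eucl n | ε < ‖z‖}.indicator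
      (fun z => d2 v x z * fker p z) z) (𝓝[>] 0) (𝓝 (Lam p v x)) := by
    unfold Lam
    refine tendsto_integral_filter_of_dominated_convergence (fun z => ‖d2 v x z * fker p z‖) ?_ ?_
      hLI.norm ?_
    · refine Eventually.of_forall fun ε => hLI.aestronglyMeasurable.indicator ?_
      exact measurableSet_lt measurable_const measurable_norm
    · exact Eventually.of_forall fun ε => Eventually.of_forall fun z => norm_indicator_le_norm_self _ _
    · refine Eventually.of_forall fun z => ?_
      by_cases hz : z = 0
      · have h0 : d2 v x z * fker p z = 0 := by
          subst hz; simp [d2]; left; ring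
        have : ∀ ε : ℝ, {z : Eucl n | ε < ‖z‖}.indicator (fun z => d2 v x z * fker p z) z = 0 := by
          intro ε
          refine indicator_apply_eq_zero.2 fun _ => h0
        simp only [this, h0]; exact tendsto_const_nhds
      · refine tendsto_const_nhds.congr' ?_
        have : ∀ᶠ ε : ℝ in 𝓝[>] 0, ε < ‖z‖ :=
          nhdsWithin_le_nhds (eventually_lt_nhds (norm_pos_iff.2 hz))
        filter_upwards [this] with ε hε
        rw [indicator_of_mem]; exact hε
  have lim2 := (lim.const_mul (1 / 2)).const_mul Cns
  have := tendsto_nhds_unique hL (lim2.congr' ?_)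
  · rw [this]; ring
  · filter_upwards [self_mem_nhdsWithin] with ε hε
    rw [step ε hε]

lemma C11loc_congr {Ω : Set (Eucl n)} {u v : Eucl n → ℝ} (hu : C11loc Ω u)
    (huv : ∀ x ∈ Ω, v x = u x) : C11loc Ω v := by
  intro x hx
  obtain ⟨r, hr, hb, hd, K, hK⟩ := hu x hx
  have hf : ∀ y ∈ ball x r, fderiv ℝ v y = fderiv ℝ u y := by
    intro y hy
    refine Filter.EventuallyEq.fderiv_eq ?_
    filter_upwards [isOpen_ball.mem_nhds hy] with z hz using huv z (hb hz)
  refine ⟨r, hr, hb, hd.congr fun y hy => huv y (hb hy), K, ?_⟩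
  intro y hy z hz
  rw [hf y hy, hf z hz]
  exact hK hy hz

lemma C11loc_continuousAt {Ω : Set (Eucl n)} {u : Eucl n → ℝ} (hu : C11loc Ω u) {x : Eucl n}
    (hx : x ∈ Ω) : ContinuousAt u x := by
  obtain ⟨r, hr, hb, hd, K, hK⟩ := hu x hx
  exact (hd.differentiableAt (ball_mem_nhds x hr)).continuousAt

end P13


open Classical in
/-- the normalised function, vanishing on the hyperplane -/
def wtil {n : ℕ} [NeZero n] (lam : ℝ) (w : Eucl n → ℝ → ℝ) (x : Eucl n) (t : ℝ) : ℝ :=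
  if x 0 = lam then 0 else w x t

section P14
variable {n : ℕ} [NeZero n] {lam : ℝ} {w : Eucl n → ℝ → ℝ}

lemma wtil_of_gt {x : Eucl n} (hx : lam < x 0) (t : ℝ) : wtil lam w x t = w x t := by
  unfold wtil; rw [if_neg hx.ne']

lemma wtil_of_eq {x : Eucl n} (hx : x 0 = lam) (t : ℝ) : wtil lam w x t = 0 := by
  unfold wtil; rw [if_pos hx]

lemma wtil_anti (hanti : ∀ x : Eucl n, lam < x 0 → ∀ t > (0 : ℝ), w (reflect lam x) t = - w x t)
    (t : ℝ) (ht : 0 < t) (x : Eucl n) : wtil lam w (reflect lam x) t = - wtil lam w x t := by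
  rcases lt_trichotomy (x 0) lam with h | h | h
  · have h1 : lam < reflect lam x 0 := by rw [reflect_zero]; linarith
    have h2 := hanti _ h1 t ht
    rw [reflect_invol] at h2
    rw [wtil_of_gt h1]
    unfold wtil
    rw [if_neg h.ne, h2, neg_neg]
  · rw [reflect_of_mem h, wtil_of_eq h, neg_zero]
  · have h1 : reflect lam x 0 < lam := by rw [reflect_zero]; linarith
    rw [wtil_of_gt h, ← hanti x h t ht]
    unfold wtil
    rw [if_neg h1.ne]

lemma wtil_TR {s Cns M C : ℝ} (hs : 0 < s) (hs1 : s < 1) (hCns : 0 < Cns)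
    {Lw clam : Eucl n → ℝ → ℝ}
    (hxreg : ∀ t > (0 : ℝ), C11loc {x : Eucl n | lam < x 0} (fun x => w x t))
    (htreg : ∀ x : Eucl n, lam < x 0 → ContDiffOn ℝ 1 (w x) (Set.Ioi 0))
    (hM : ∀ x : Eucl n, ∀ t > (0 : ℝ), |w x t| ≤ M) (hM0 : 0 ≤ M)
    (hC : ∀ x : Eucl n, lam < x 0 → ∀ t > (0 : ℝ), |clam x t| ≤ C) (hC0 : 0 ≤ C)
    (hLw : ∀ x : Eucl n, lam < x 0 → ∀ t > (0 : ℝ),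
      IsFracLap Cns s (fun y => w y t) x (Lw x t))
    (hpde : ∀ x : Eucl n, lam < x 0 → ∀ t > (0 : ℝ),
      deriv (w x) t + Lw x t = clam x t * w x t)
    (hanti : ∀ x : Eucl n, lam < x 0 → ∀ t > (0 : ℝ), w (reflect lam x) t = - w x t) :
    TR {x : Eucl n | lam < x 0} ((n : ℝ) + 2 * s) (Cns / 2) C M (wtil lam w)
      (fun x t => deriv (w x) t) := by
  have hMt : ∀ x : Eucl n, ∀ t > (0 : ℝ), |wtil lam w x t| ≤ M := by
    intro x t ht
    unfold wtil
    split_ifs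
    · rw [abs_zero]; exact hM0
    · exact hM x t ht
  have hreg : ∀ t > (0 : ℝ), C11loc {x : Eucl n | lam < x 0} (fun x => wtil lam w x t) :=
    fun t ht => C11loc_congr (hxreg t ht) fun x hx => wtil_of_gt hx t
  have hmeas : ∀ t > (0 : ℝ), Measurable (fun x => wtil lam w x t) := by
    intro t ht
    have h1 : Measurable ({x : Eucl n | lam < x 0}.indicator (fun x => wtil lam w x t)) := by
      classical
      rw [← piecewise_eq_indicator]
      exact ContinuousOn.measurable_piecewise
        (fun x hx => (C11loc_continuousAt (hreg t ht) hx).continuousWithinAt)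
        continuousOn_const measSig
    have h2 := h1.sub (h1.comp (reflect_mp (n := n) (lam := lam)).measurable)
    convert h2 using 1
    funext x
    simp only [Pi.sub_apply, Function.comp_apply]
    rcases lt_trichotomy (x 0) lam with h | h | h
    · have m1 : x ∉ {x : Eucl n | lam < x 0} := not_lt.2 h.le
      have m2 : reflect lam x ∈ {x : Eucl n | lam < x 0} := by
        show lam < reflect lam x 0
        rw [reflect_zero]; linarith
      rw [indicator_of_notMem m1, indicator_of_mem m2, wtil_anti hanti t ht]; ring
    · have m1 : x ∉ {x : Eucl n | lam < x 0} := not_lt.2 h.le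
      rw [reflect_of_mem h, indicator_of_notMem m1, wtil_of_eq h, sub_zero]
    · have m1 : x ∈ {x : Eucl n | lam < x 0} := h
      have m2 : reflect lam x ∉ {x : Eucl n | lam < x 0} := by
        show ¬ lam < reflect lam x 0
        rw [reflect_zero]; linarith
      rw [indicator_of_mem m1, indicator_of_notMem m2, sub_zero]
  have hI := q1_ker_integrable (n := n) hs hs1
  have hd2 : ∀ t > 0, ∀ S : Set (Eucl n), IsCompact S → S ⊆ {x : Eucl n | lam < x 0} →
      ∃ N, 0 ≤ N ∧ ∀ x ∈ S, ∀ z, |d2 (fun y => wtil lam w y t) x z| ≤ N * ‖z‖ ^ 2 :=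
    fun t ht S hS hSS => d2_le_of_C11 (fun x => hMt x t ht) (hreg t ht) hS hSS
  refine ⟨hI, by positivity, hC0, hM0, hmeas, hMt, ?_, ?_, hd2, ?_, ?_⟩
  · intro x
    rcases lt_trichotomy (x 0) lam with h | h | h
    · have h1 : lam < reflect lam x 0 := by rw [reflect_zero]; linarith
      refine (htreg _ h1).continuousOn.neg.congr fun t ht => ?_
      have := wtil_anti hanti t ht x
      rw [wtil_of_gt h1] at this
      show _ = - w (reflect lam x) t
      linarith
    · exact continuousOn_const.congr fun t ht => wtil_of_eq h t
    · exact (htreg x h).continuousOn.congr fun t ht => wtil_of_gt h t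
  · intro x hx t ht
    have e : wtil lam w x = w x := funext fun t => wtil_of_gt hx t
    rw [e]
    exact ((htreg x hx).differentiableOn_one.differentiableAt (Ioi_mem_nhds ht)).hasDerivAt
  · intro x hx t ht
    obtain ⟨N, hN, hNd⟩ := hd2 t ht {x} isCompact_singleton (singleton_subset_iff.2 hx)
    have huv : (fun y => w y t) =ᵐ[volume] (fun y => wtil lam w y t) := by
      have h0 : ∀ᵐ y : Eucl n, ¬ (y 0 = lam) := by
        rw [ae_iff]
        simp only [not_not]
        exact hyper_null
      filter_upwards [h0] with y hy
      unfold wtil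
      rw [if_neg hy]
    have e := fraclap_eq hI (hmeas t ht) (fun y => hMt y t ht) huv (wtil_of_gt hx t).symm
      (fun z => d2_le_q1 (fun y => hMt y t ht) (hNd x rfl z)) (hLw x hx t ht)
    rw [← e, hpde x hx t ht, wtil_of_gt hx, abs_mul]
    exact mul_le_mul_of_nonneg_right (hC x hx t ht) (abs_nonneg _)
  · intro t ht x hx
    exact C11loc_continuousAt (hreg t ht) hx

end P14

/-- asymptotic Hopf's lemma for antisymmetric functions. -/
theorem asymptotic_hopf_lemma_antisymmetric
    {n : ℕ} [NeZero n] {s lam Cns : ℝ} (hs : 0 < s) (hs1 : s < 1) (hCns : 0 < Cns)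
    (w Lw clam : Eucl n → ℝ → ℝ) (ψ : Eucl n → ℝ)
    -- regularity of `w_λ` in `x` on `Σ̃_λ = {x | x₁ > λ}` and `C¹` in `t` on `(0,∞)`
    (hxreg : ∀ t > (0 : ℝ),
      C11loc {x : Eucl n | lam < x 0} (fun x => w x t) ∧ L2s s (fun x => w x t))
    (htreg : ∀ x : Eucl n, lam < x 0 → ContDiffOn ℝ 1 (w x) (Set.Ioi 0))
    -- `w_λ` is bounded on `ℝⁿ × (0,∞)`
    (hbdd : ∃ M : ℝ, ∀ x : Eucl n, ∀ t > (0 : ℝ), |w x t| ≤ M)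
    -- `c_λ` is bounded uniformly in `t`
    (hcbdd : ∃ M : ℝ, ∀ x : Eucl n, lam < x 0 → ∀ t > (0 : ℝ), |clam x t| ≤ M)
    -- (i)  the equation, with `Lw` the fractional Laplacian of `w_λ(·,t)`
    (hLw : ∀ x : Eucl n, lam < x 0 → ∀ t > (0 : ℝ),
      IsFracLap Cns s (fun y => w y t) x (Lw x t))
    (hpde : ∀ x : Eucl n, lam < x 0 → ∀ t > (0 : ℝ),
      deriv (w x) t + Lw x t = clam x t * w x t)
    -- (ii)  antisymmetry
    (hanti : ∀ x : Eucl n, lam < x 0 → ∀ t > (0 : ℝ), w (reflect lam x) t = - w x t)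
    -- (iii)  `liminf_{t → ∞} w_λ(x,t) ≥ 0`
    (hliminf : ∀ x : Eucl n, lam < x 0 → ∀ ε > (0 : ℝ), ∀ᶠ t in atTop, -ε ≤ w x t)
    -- `ψ_λ` is an ω-limit of `w_λ`
    (tk : ℕ → ℝ) (htk : Tendsto tk atTop atTop)
    (hconv : TendstoUniformly (fun k x => w x (tk k)) ψ atTop)
    -- `ψ_λ ≥ 0` on `Σ̃_λ` and `ψ_λ > 0` somewhere in `Σ̃_λ`
    (hψpos : ∀ x : Eucl n, lam < x 0 → 0 ≤ ψ x)
    (hψsome : ∃ x : Eucl n, lam < x 0 ∧ 0 < ψ x) :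
    -- conclusion: `∂ψ_λ/∂ν < 0` on `T_λ`, i.e. `liminf_{h→0⁺} ψ_λ(x + h e₁)/h > 0`
    ∀ x : Eucl n, x 0 = lam →
      ∃ c > (0 : ℝ), ∀ᶠ h in 𝓝[>] (0 : ℝ),
        c ≤ ψ (x + h • EuclideanSpace.single (0 : Fin n) (1 : ℝ)) / h := by
  obtain ⟨M, hM⟩ := hbdd
  obtain ⟨C, hC⟩ := hcbdd
  obtain ⟨xs, hxs, hpos⟩ := hψsome
  intro x hx
  have hTR := wtil_TR hs hs1 hCns (fun t ht => (hxreg t ht).1) htreg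
    (fun x t ht => (hM x t ht).trans (le_abs_self M)) (abs_nonneg M)
    (fun x hx t ht => (hC x hx t ht).trans (le_abs_self C)) (abs_nonneg C) hLw hpde hanti
  have hn : (1 : ℝ) ≤ (n : ℝ) := by exact_mod_cast Nat.one_le_iff_ne_zero.2 (NeZero.ne n)
  obtain ⟨κ0, hκ0, r, hr, hfin⟩ := ahl_main hTR (by positivity) (by linarith)
    (wtil_anti hanti)
    (fun x hx ε hε => by simpa only [wtil_of_gt hx] using hliminf x hx ε hε)
    htk (ψ := ψ)
    (by
      intro η hη
      filter_upwards [Metric.tendstoUniformly_iff.1 hconv η hη] with k hk y hy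
      rw [wtil_of_gt hy]
      have := hk y
      rw [dist_comm, Real.dist_eq] at this
      exact this.le) hxs hpos hx
  refine ⟨κ0, hκ0, ?_⟩
  filter_upwards [Ioc_mem_nhdsGT hr] with h hh
  have h0 : (x + h • EuclideanSpace.single (0 : Fin n) (1 : ℝ)) 0 = lam + h := by
    simp [hx]
  have h1 := hfin (x + h • EuclideanSpace.single (0 : Fin n) (1 : ℝ)) (by rw [h0]; linarith [hh.1])
    (by
      rw [dist_eq_norm, add_sub_cancel_left, norm_smul, EuclideanSpace.norm_single]
      simp only [norm_one, mul_one, Real.norm_eq_abs, abs_of_pos hh.1]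
      exact hh.2)
  rw [h0, add_sub_cancel_left] at h1
  rwa [le_div_iff₀ hh.1]
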